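/- arXiv:2108.10214 — 9 statements merged into one kernel-verified Lean document; each statement's English description precedes it below -/
import Mathlib

section
/- Let ρ > 1 be real, n ≥ 1 an integer, and μ₁, …, μₙ ∈ ℂ with |μᵢ| < ρ for all i. Let W_ρ^{≥0} denote the set of coefficient sequences h : ℕ → ℂ with ∑ₖ |hₖ| ρᵏ < ∞, each defining a holomorphic function h(λ) = ∑ₖ hₖ λᵏ on the open disk D(0,ρ). Then for every h ∈ W_ρ^{≥0} there exist unique (a₀, …, a_{n−1}) ∈ ℂⁿ and a unique g ∈ W_ρ^{≥0} such that h(λ) = ∑_{k=0}^{n−1} aₖ λᵏ + g(λ) ∏_{i=1}^{n} (λ − μᵢ) for all λ ∈ D(0,ρ); that is, the map (a₀, …, a_{n−1}, g) ↦ ∑_{k=0}^{n−1} aₖ λᵏ + g(λ) ∏_{i=1}^{n} (λ − μᵢ) is a bijection from ℂⁿ × W_ρ^{≥0} onto W_ρ^{≥0}. -/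
/-!
The series `∑ hₖ Xᵏ` with `∑ ‖hₖ‖ ρᵏ < ∞` form an algebra, and by the identity theorem an equation
between the functions they define on the disk is an equation in this algebra. Unique division with
remainder by monic polynomials `p` and `q` gives the same for `p * q`, so it is enough to divide by
one factor `X - m`. There the quotient has the coefficients `∑ⱼ h_{k+1+j} mʲ`, and it lies in the
algebra because `(k, j) ↦ (k + j, j)` is injective and `∑ (‖m‖ / ρ)ʲ` converges. The decomposition
is unique since evaluation at `m` recovers the remainder and power series have no zero divisors.
-/

open scoped NNReal Polynomial PowerSeries
open Polynomial (aeval degreeLTEquiv)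
open PowerSeries (coeff)

section PolynomialDegree

variable {R : Type*} [CommRing R] {p q r s : R[X]}

theorem degree_add_mul_lt_degree_mul (hp : p.Monic) (hq : q.Monic)
    (hr : r.degree < p.degree) (hs : s.degree < q.degree) :
    (r + s * p).degree < (p * q).degree := by
  have zero_le_degree : 0 ≤ q.degree := Polynomial.zero_le_degree_iff.mpr fun hq0 ↦ by simp_all
  rw [hq.degree_mul]
  refine (Polynomial.degree_add_le _ _).trans_lt (max_lt ?_ ?_)
  · exact hr.trans_le (le_add_of_nonneg_right zero_le_degree)
  · rw [hp.degree_mul, add_comm]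
    exact WithBot.add_lt_add_left (Polynomial.degree_ne_bot.mpr fun h ↦ by simp_all) hs

theorem degree_divByMonic_lt_of_degree_lt_mul [Nontrivial R] (hp : p.Monic) (hq : q.Monic)
    (hr : r.degree < (p * q).degree) : (r /ₘ p).degree < q.degree := by
  rcases le_or_gt p.degree r.degree with hle | hlt
  · rw [hq.degree_mul, ← Polynomial.degree_add_divByMonic hp hle] at hr
    exact lt_of_add_lt_add_left hr
  · rw [(Polynomial.divByMonic_eq_zero_iff hp).mpr hlt, Polynomial.degree_zero]
    exact bot_lt_iff_ne_bot.mpr (Polynomial.degree_ne_bot.mpr hq.ne_zero)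

end PolynomialDegree

section DivisionWithRemainder

variable {R A : Type*} [CommRing R] [CommRing A] [Algebra R A]

theorem aeval_degreeLTEquiv_symm {n : ℕ} (x : A) (a : Fin n → R) :
    aeval x ((degreeLTEquiv R n).symm a : R[X]) = ∑ k, a k • x ^ (k : ℕ) := by
  simp [degreeLTEquiv, Polynomial.aeval_monomial, Algebra.smul_def]

/-- Unique division with remainder by `q(x)` in the `R`-algebra `A`, the remainders being the
polynomial expressions in `x` of degree less than `deg q`. -/
def HasUniqueDivision (x : A) (q : R[X]) : Prop :=
  ∀ f : A, ∃! rg : R[X] × A, rg.1.degree < q.degree ∧ f = aeval x rg.1 + rg.2 * aeval x q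

namespace HasUniqueDivision

variable {x : A} {p q : R[X]}

theorem eq_of_aeval_add_eq (hq : HasUniqueDivision x q) {r s : R[X]} {g h : A}
    (hr : r.degree < q.degree) (hs : s.degree < q.degree)
    (heq : aeval x r + g * aeval x q = aeval x s + h * aeval x q) : r = s ∧ g = h :=
  Prod.ext_iff.mp <| (hq _).unique (y₁ := (r, g)) (y₂ := (s, h)) ⟨hr, rfl⟩ ⟨hs, heq⟩

theorem existsUnique_sum_add_mul {n : ℕ} (divq : HasUniqueDivision x q) (hn : q.degree = n)
    (f : A) : ∃! ag : (Fin n → R) × A, f = ∑ k, ag.1 k • x ^ (k : ℕ) + ag.2 * aeval x q := by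
  simp only [← aeval_degreeLTEquiv_symm]
  obtain ⟨⟨r, g⟩, ⟨hr, rfl⟩, -⟩ := divq f
  have mem_degreeLT : r ∈ Polynomial.degreeLT R n := Polynomial.mem_degreeLT.mpr (hn ▸ hr)
  refine ⟨(degreeLTEquiv R n ⟨r, mem_degreeLT⟩, g), by simp, ?_⟩
  rintro ⟨a, h⟩ heq
  have ha := Polynomial.mem_degreeLT.mp ((degreeLTEquiv R n).symm a).2
  obtain ⟨r_eq, g_eq⟩ := divq.eq_of_aeval_add_eq hr (hn ▸ ha) heq
  simp_all

variable [Nontrivial R]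

theorem one : HasUniqueDivision x (1 : R[X]) := by
  refine fun f ↦ ⟨(0, f), by simp, ?_⟩
  rintro ⟨r, g⟩ ⟨hr, hf⟩
  have r_eq_zero : r = 0 := by simpa using hr
  simp_all

theorem mul (hp : p.Monic) (hq : q.Monic) (divp : HasUniqueDivision x p)
    (divq : HasUniqueDivision x q) : HasUniqueDivision x (p * q) := by
  intro f
  obtain ⟨⟨r, g⟩, ⟨hr, rfl⟩, -⟩ := divp f
  obtain ⟨⟨s, h⟩, ⟨hs, rfl⟩, -⟩ := divq g
  refine ⟨(r + s * p, h), ⟨degree_add_mul_lt_degree_mul hp hq hr hs, ?_⟩, ?_⟩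
  · simp only [map_add, map_mul]
    ring
  rintro ⟨t, k⟩ ⟨ht, heq⟩
  have euclid := Polynomial.modByMonic_add_div t p
  obtain ⟨mod_eq, quot_eq⟩ := divp.eq_of_aeval_add_eq (Polynomial.degree_modByMonic_lt t hp) hr
    (g := aeval x (t /ₘ p) + k * aeval x q) (h := aeval x s + h * aeval x q) <| by
      have aeval_euclid := congrArg (aeval x) euclid
      simp only [map_add, map_mul] at aeval_euclid heq
      linear_combination aeval_euclid - heq
  obtain ⟨div_eq, rfl⟩ :=
    divq.eq_of_aeval_add_eq (degree_divByMonic_lt_of_degree_lt_mul hp hq ht) hs quot_eq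
  rw [← euclid, mod_eq, div_eq, mul_comm p]

theorem prod {ι : Type*} (s : Finset ι) {q : ι → R[X]} (hq : ∀ i ∈ s, (q i).Monic)
    (divq : ∀ i ∈ s, HasUniqueDivision x (q i)) : HasUniqueDivision x (∏ i ∈ s, q i) := by
  classical
  induction s using Finset.induction_on with
  | empty => simpa using one
  | insert i s hi ih =>
    rw [Finset.prod_insert hi]
    simp only [Finset.forall_mem_insert] at hq divq
    exact mul hq.1 (Polynomial.monic_prod_of_monic _ _ hq.2) divq.1 (ih hq.2 divq.2)

end HasUniqueDivision

end DivisionWithRemainder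

section WeightedSummability

variable {𝕜 : Type*} [NormedField 𝕜] {ρ : ℝ≥0} {f g : 𝕜⟦X⟧}

theorem summable_norm_coeff_add (hf : Summable fun k ↦ ‖coeff k f‖ * ρ ^ k)
    (hg : Summable fun k ↦ ‖coeff k g‖ * ρ ^ k) :
    Summable fun k ↦ ‖coeff k (f + g)‖ * ρ ^ k := by
  refine .of_nonneg_of_le (fun k ↦ by positivity) (fun k ↦ ?_) (hf.add hg)
  rw [map_add, ← add_mul]
  gcongr
  exact norm_add_le _ _

theorem summable_norm_coeff_mul (hf : Summable fun k ↦ ‖coeff k f‖ * ρ ^ k)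
    (hg : Summable fun k ↦ ‖coeff k g‖ * ρ ^ k) :
    Summable fun k ↦ ‖coeff k (f * g)‖ * ρ ^ k := by
  have cauchyProduct : Summable fun k ↦ ∑ ij ∈ Finset.HasAntidiagonal.antidiagonal k,
      ‖coeff ij.1 f‖ * (ρ : ℝ) ^ ij.1 * (‖coeff ij.2 g‖ * (ρ : ℝ) ^ ij.2) :=
    summable_sum_mul_antidiagonal_of_summable_mul
      (f := fun k ↦ ‖coeff k f‖ * (ρ : ℝ) ^ k) (g := fun k ↦ ‖coeff k g‖ * (ρ : ℝ) ^ k)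
      (hf.mul_of_nonneg hg (fun _ ↦ by positivity) (fun _ ↦ by positivity))
  refine .of_nonneg_of_le (fun k ↦ by positivity) (fun k ↦ ?_) cauchyProduct
  rw [PowerSeries.coeff_mul]
  refine (mul_le_mul_of_nonneg_right (norm_sum_le _ _) (by positivity)).trans_eq ?_
  rw [Finset.sum_mul]
  refine Finset.sum_congr rfl fun ij hij ↦ ?_
  rw [norm_mul, ← Finset.HasAntidiagonal.mem_antidiagonal.mp hij]
  ring

theorem summable_norm_coeff_coe (p : 𝕜[X]) :
    Summable fun k ↦ ‖coeff k (p : 𝕜⟦X⟧)‖ * ρ ^ k := by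
  refine summable_of_ne_finset_zero (s := p.support) fun k hk ↦ ?_
  simp_all

end WeightedSummability

/-- The space `W_ρ^{≥0}`, as an algebra of formal power series. The radius is taken in `ℝ≥0` so that
the weights `ρᵏ` are nonnegative without further hypotheses. -/
def wienerAlgebra (𝕜 : Type*) [NormedField 𝕜] (ρ : ℝ≥0) : Subalgebra 𝕜 𝕜⟦X⟧ where
  carrier := {f | Summable fun k ↦ ‖coeff k f‖ * ρ ^ k}
  add_mem' := summable_norm_coeff_add
  mul_mem' := summable_norm_coeff_mul
  algebraMap_mem' c := by simpa using summable_norm_coeff_coe (Polynomial.C c)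

namespace wienerAlgebra

variable {𝕜 : Type*} [NormedField 𝕜] {ρ : ℝ≥0} {f : 𝕜⟦X⟧} {m z : 𝕜}

theorem mem_iff : f ∈ wienerAlgebra 𝕜 ρ ↔ Summable fun k ↦ ‖coeff k f‖ * ρ ^ k :=
  Iff.rfl

/-- The coordinate function `λ ↦ λ` as an element of `W_ρ^{≥0}`. -/
noncomputable def X : wienerAlgebra 𝕜 ρ :=
  ⟨PowerSeries.X, mem_iff.mpr <| by
    simpa using summable_norm_coeff_coe (ρ := ρ) (Polynomial.X : 𝕜[X])⟩

theorem coe_X : ((X : wienerAlgebra 𝕜 ρ) : 𝕜⟦X⟧) = PowerSeries.X := rfl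

theorem X_sub_algebraMap_ne_zero (m : 𝕜) : (X - algebraMap 𝕜 (wienerAlgebra 𝕜 ρ) m) ≠ 0 := by
  intro h
  simpa [coe_X, PowerSeries.algebraMap_apply, PowerSeries.coeff_C] using
    congrArg (fun f : wienerAlgebra 𝕜 ρ ↦ coeff 1 (f : 𝕜⟦X⟧)) h

/-- Elements of `W_ρ^{≥0}` as plain coefficient sequences. -/
noncomputable def equivSeq :
    wienerAlgebra 𝕜 ρ ≃ {g : ℕ → 𝕜 // Summable fun k ↦ ‖g k‖ * (ρ : ℝ) ^ k} where
  toFun f := ⟨fun k ↦ coeff k (f : 𝕜⟦X⟧), f.2⟩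
  invFun g := ⟨.mk g.1, by simpa [mem_iff] using g.2⟩
  left_inv f := by ext; simp
  right_inv g := by ext; simp

theorem summable_norm_coeff_mul_pow (hf : f ∈ wienerAlgebra 𝕜 ρ) (hz : ‖z‖ ≤ ρ) :
    Summable fun k ↦ ‖coeff k f * z ^ k‖ := by
  refine .of_nonneg_of_le (fun k ↦ by positivity) (fun k ↦ ?_) hf
  rw [norm_mul, norm_pow]
  gcongr

/-- The values at `m` of the successive tails of `f`, that is, the numbers
`∑ⱼ f_{k+j} mʲ` produced by Horner's scheme. From index `1` on they are the coefficients of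
the quotient of `f` by `λ - m`. -/
noncomputable def tailEval (f : 𝕜⟦X⟧) (m : 𝕜) : 𝕜⟦X⟧ :=
  .mk fun k ↦ ∑' j, coeff (k + j) f * m ^ j

theorem coeff_tailEval (k : ℕ) : coeff k (tailEval f m) = ∑' j, coeff (k + j) f * m ^ j :=
  PowerSeries.coeff_mk _ _

theorem summable_norm_coeff_add_mul_pow (hf : f ∈ wienerAlgebra 𝕜 ρ) (hm : ‖m‖ < ρ) :
    Summable fun kj : ℕ × ℕ ↦ ‖coeff (kj.1 + kj.2) f * m ^ kj.2‖ * ρ ^ kj.1 := by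
  have hρ : (0 : ℝ) < ρ := (norm_nonneg m).trans_lt hm
  have geometric : Summable fun j : ℕ ↦ (‖m‖ / ρ) ^ j :=
    summable_geometric_of_lt_one (by positivity) ((div_lt_one hρ).mpr hm)
  have shear_injective : Function.Injective fun kj : ℕ × ℕ ↦ (kj.1 + kj.2, kj.2) := by
    rintro ⟨k, j⟩ ⟨k', j'⟩ h
    simp only [Prod.mk.injEq] at h ⊢
    omega
  refine (((mem_iff.mp hf).mul_of_nonneg geometric (fun k ↦ ?_) (fun j ↦ ?_)).comp_injective
    shear_injective).congr ?_
  · positivity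
  · positivity
  rintro ⟨k, j⟩
  simp only [Function.comp_apply, norm_mul, norm_pow, pow_add, div_pow]
  field_simp

theorem summable_norm_coeff_add_mul_pow_right (hf : f ∈ wienerAlgebra 𝕜 ρ) (hm : ‖m‖ < ρ)
    (k : ℕ) : Summable fun j ↦ ‖coeff (k + j) f * m ^ j‖ := by
  have hρ : (0 : ℝ) < ρ := (norm_nonneg m).trans_lt hm
  exact (summable_mul_right_iff (pow_ne_zero k hρ.ne')).mp
    ((summable_norm_coeff_add_mul_pow hf hm).prod_factor k)

theorem tailEval_mem (hf : f ∈ wienerAlgebra 𝕜 ρ) (hm : ‖m‖ < ρ) :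
    tailEval f m ∈ wienerAlgebra 𝕜 ρ := by
  refine mem_iff.mpr (.of_nonneg_of_le (fun k ↦ by positivity) (fun k ↦ ?_)
    (summable_norm_coeff_add_mul_pow hf hm).prod)
  simp only [coeff_tailEval, tsum_mul_right]
  gcongr
  exact norm_tsum_le_tsum_norm (summable_norm_coeff_add_mul_pow_right hf hm k)

theorem mk_coeff_succ_mem (hρ : 0 < ρ) (hf : f ∈ wienerAlgebra 𝕜 ρ) :
    PowerSeries.mk (fun k ↦ coeff (k + 1) f) ∈ wienerAlgebra 𝕜 ρ := by
  have hρ' : (ρ : ℝ) ≠ 0 := by positivity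
  refine mem_iff.mpr ((summable_mul_right_iff hρ').mp ?_)
  refine ((summable_nat_add_iff 1).mpr (mem_iff.mp hf)).congr fun k ↦ ?_
  rw [PowerSeries.coeff_mk, pow_succ, mul_assoc]

section Complete

variable [CompleteSpace 𝕜]

/-- Evaluation of an element of `W_ρ^{≥0}` at a point of the closed disk of radius `ρ`. -/
noncomputable def eval (hz : ‖z‖ ≤ ρ) : wienerAlgebra 𝕜 ρ →ₐ[𝕜] 𝕜 where
  toFun f := ∑' k, coeff k (f : 𝕜⟦X⟧) * z ^ k
  map_one' := by
    rw [tsum_eq_single 0 fun k hk ↦ by simp [PowerSeries.coeff_one, hk]]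
    simp
  map_zero' := by simp
  map_add' f g := by
    rw [← (summable_norm_coeff_mul_pow f.2 hz).of_norm.tsum_add
      (summable_norm_coeff_mul_pow g.2 hz).of_norm]
    simp [add_mul]
  map_mul' f g := by
    have summable_f := summable_norm_coeff_mul_pow f.2 hz
    have summable_g := summable_norm_coeff_mul_pow g.2 hz
    rw [tsum_mul_tsum_eq_tsum_sum_antidiagonal_of_summable_norm summable_f summable_g]
    refine tsum_congr fun k ↦ ?_
    rw [MulMemClass.coe_mul, PowerSeries.coeff_mul, Finset.sum_mul]
    refine Finset.sum_congr rfl fun ij hij ↦ ?_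
    rw [← Finset.HasAntidiagonal.mem_antidiagonal.mp hij]
    ring
  commutes' c := by
    rw [tsum_eq_single 0 fun k hk ↦ by simp [PowerSeries.coeff_C, hk]]
    simp

theorem eval_apply (hz : ‖z‖ ≤ ρ) (f : wienerAlgebra 𝕜 ρ) :
    eval hz f = ∑' k, coeff k (f : 𝕜⟦X⟧) * z ^ k := rfl

theorem eval_X (hz : ‖z‖ ≤ ρ) : eval hz X = z := by
  rw [eval_apply, tsum_eq_single 1 fun k hk ↦ by simp [coe_X, PowerSeries.coeff_X, hk]]
  simp [coe_X]

theorem eval_aeval_X (hz : ‖z‖ ≤ ρ) (p : 𝕜[X]) : eval hz (aeval X p) = p.eval z := by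
  rw [← Polynomial.aeval_algHom_apply, eval_X, Polynomial.coe_aeval_eq_eval]

theorem coeff_tailEval_eq_add (hf : f ∈ wienerAlgebra 𝕜 ρ) (hm : ‖m‖ < ρ) (k : ℕ) :
    coeff k (tailEval f m) = coeff k f + m * coeff (k + 1) (tailEval f m) := by
  rw [coeff_tailEval, coeff_tailEval,
    (summable_norm_coeff_add_mul_pow_right hf hm k).of_norm.tsum_eq_zero_add, ← tsum_mul_left]
  congr 1
  · simp
  · refine tsum_congr fun j ↦ ?_
    rw [add_right_comm, add_assoc]
    ring

theorem exists_eq_algebraMap_add_mul_X_sub (hm : ‖m‖ < ρ) (f : wienerAlgebra 𝕜 ρ) :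
    ∃ (c : 𝕜) (g : wienerAlgebra 𝕜 ρ),
      f = algebraMap 𝕜 _ c + g * (X - algebraMap 𝕜 _ m) := by
  have hρ : 0 < ρ := NNReal.coe_pos.mp ((norm_nonneg m).trans_lt hm)
  have horner := coeff_tailEval_eq_add f.2 hm
  refine ⟨coeff 0 (tailEval f m), ⟨_, mk_coeff_succ_mem hρ (tailEval_mem f.2 hm)⟩, Subtype.ext ?_⟩
  ext (_ | k)
  · simp [coe_X, horner 0, mul_comm]
  · simp [coe_X, horner (k + 1), mul_sub, mul_comm _ (PowerSeries.C m),
      PowerSeries.coeff_succ_mul_X]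

theorem algebraMap_add_mul_X_sub_inj (hm : ‖m‖ ≤ ρ) {c d : 𝕜} {g h : wienerAlgebra 𝕜 ρ}
    (heq : algebraMap 𝕜 _ c + g * (X - algebraMap 𝕜 _ m) =
      algebraMap 𝕜 _ d + h * (X - algebraMap 𝕜 _ m)) : c = d ∧ g = h := by
  have const_eq : c = d := by simpa [eval_X] using congrArg (eval hm) heq
  subst const_eq
  exact ⟨rfl, mul_right_cancel₀ (X_sub_algebraMap_ne_zero m) (add_left_cancel heq)⟩

theorem hasUniqueDivision_X_sub_C (hm : ‖m‖ < ρ) :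
    HasUniqueDivision (X : wienerAlgebra 𝕜 ρ) (Polynomial.X - Polynomial.C m) := by
  intro f
  obtain ⟨c, g, rfl⟩ := exists_eq_algebraMap_add_mul_X_sub hm f
  refine ⟨(Polynomial.C c, g), ⟨?_, by simp⟩, ?_⟩
  · rw [Polynomial.degree_X_sub_C]
    exact Polynomial.degree_C_lt
  rintro ⟨r, h⟩ ⟨hr, heq⟩
  obtain ⟨d, rfl⟩ : ∃ d, r = Polynomial.C d := by
    rw [Polynomial.degree_X_sub_C, Nat.WithBot.lt_one_iff_le_zero] at hr
    exact ⟨_, Polynomial.eq_C_of_degree_le_zero hr⟩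
  obtain ⟨rfl, rfl⟩ := algebraMap_add_mul_X_sub_inj hm.le (by simpa using heq)
  rfl

theorem hasUniqueDivision_prod_X_sub_C {ι : Type*} (s : Finset ι) {μ : ι → 𝕜}
    (hμ : ∀ i ∈ s, ‖μ i‖ < ρ) : HasUniqueDivision (X : wienerAlgebra 𝕜 ρ)
      (∏ i ∈ s, (Polynomial.X - Polynomial.C (μ i))) :=
  .prod s (fun i _ ↦ Polynomial.monic_X_sub_C (μ i)) fun i hi ↦ hasUniqueDivision_X_sub_C (hμ i hi)

end Complete

section Identity

variable {𝕜 : Type*} [NontriviallyNormedField 𝕜] [CompleteSpace 𝕜] {ρ : ℝ≥0}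

theorem eq_zero_of_eval_eq_zero (hρ : 0 < ρ) {f : wienerAlgebra 𝕜 ρ}
    (hf : ∀ (z : 𝕜) (hz : ‖z‖ < ρ), eval hz.le f = 0) : f = 0 := by
  have hasFPowerSeriesAt_zero : HasFPowerSeriesAt (0 : 𝕜 → 𝕜)
      (.ofScalars 𝕜 fun k ↦ coeff k (f : 𝕜⟦X⟧)) 0 := by
    rw [hasFPowerSeriesAt_iff]
    filter_upwards [Metric.ball_mem_nhds (0 : 𝕜) (NNReal.coe_pos.mpr hρ)] with z hz
    rw [mem_ball_zero_iff] at hz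
    have hasSum := (summable_norm_coeff_mul_pow f.2 hz.le).of_norm.hasSum
    rw [← eval_apply hz.le, hf z hz] at hasSum
    simpa [FormalMultilinearSeries.coeff_ofScalars, mul_comm] using hasSum
  ext k
  have coeff_eq := congrArg (FormalMultilinearSeries.coeff · k) hasFPowerSeriesAt_zero.eq_zero
  rwa [FormalMultilinearSeries.coeff_ofScalars] at coeff_eq

theorem eq_iff_eval_eq (hρ : 0 < ρ) {f g : wienerAlgebra 𝕜 ρ} :
    f = g ↔ ∀ (z : 𝕜) (hz : ‖z‖ < ρ), eval hz.le f = eval hz.le g := by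
  refine ⟨fun h z hz ↦ by rw [h], fun h ↦ sub_eq_zero.mp ?_⟩
  exact eq_zero_of_eval_eq_zero hρ fun z hz ↦ by rw [map_sub, h z hz, sub_self]

end Identity

end wienerAlgebra

theorem stmt_0_general {𝕜 : Type*} [NontriviallyNormedField 𝕜] [CompleteSpace 𝕜] {ρ : ℝ}
    (hρ : 0 < ρ) {n : ℕ} (μ : Fin n → 𝕜) (hμ : ∀ i, ‖μ i‖ < ρ)
    (h : ℕ → 𝕜) (hh : Summable (fun k => ‖h k‖ * ρ ^ k)) :
    ∃! ag : (Fin n → 𝕜) × {g : ℕ → 𝕜 // Summable (fun k => ‖g k‖ * ρ ^ k)},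
      ∀ lam : 𝕜, ‖lam‖ < ρ →
        (∑' k : ℕ, h k * lam ^ k) =
          (∑ k : Fin n, ag.1 k * lam ^ (k : ℕ)) +
            (∑' k : ℕ, ag.2.1 k * lam ^ k) * ∏ i : Fin n, (lam - μ i) := by
  lift ρ to ℝ≥0 using hρ.le
  have degree_prod : (∏ i, (Polynomial.X - Polynomial.C (μ i))).degree = (n : WithBot ℕ) := by
    simp [Polynomial.degree_prod]
  have division := (wienerAlgebra.hasUniqueDivision_prod_X_sub_C Finset.univ
    fun i _ ↦ hμ i).existsUnique_sum_add_mul degree_prod (wienerAlgebra.equivSeq.symm ⟨h, hh⟩)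
  refine (((Equiv.refl _).prodCongr wienerAlgebra.equivSeq).existsUnique_congr fun ag ↦ ?_).mp
    division
  rw [wienerAlgebra.eq_iff_eval_eq (NNReal.coe_pos.mp hρ)]
  refine forall₂_congr fun z hz ↦ ?_
  simp only [map_add, map_mul, map_sum, map_smul, map_pow, wienerAlgebra.eval_aeval_X,
    wienerAlgebra.eval_X, Polynomial.eval_prod, Polynomial.eval_sub, Polynomial.eval_X,
    Polynomial.eval_C, smul_eq_mul]
  simp [wienerAlgebra.eval_apply, wienerAlgebra.equivSeq]

/- STATEMENT 0: Decomposition of functions in `W_ρ^{≥0}` along the polynomial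
`∏ (λ - μᵢ)`: for every `h` with `∑ ‖hₖ‖ ρᵏ < ∞` there exist unique coefficients
`a₀, …, a_{n-1}` and a unique `g ∈ W_ρ^{≥0}` with
`h(λ) = ∑_{k<n} aₖ λᵏ + g(λ) ∏ᵢ (λ - μᵢ)` on the disk `D(0,ρ)`. -/
theorem stmt_0 (ρ : ℝ) (hρ : 1 < ρ) (n : ℕ) (hn : 1 ≤ n)
    (μ : Fin n → ℂ) (hμ : ∀ i, ‖μ i‖ < ρ)
    (h : ℕ → ℂ) (hh : Summable (fun k => ‖h k‖ * ρ ^ k)) :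
    ∃! ag : (Fin n → ℂ) × {g : ℕ → ℂ // Summable (fun k => ‖g k‖ * ρ ^ k)},
      ∀ lam : ℂ, ‖lam‖ < ρ →
        (∑' k : ℕ, h k * lam ^ k) =
          (∑ k : Fin n, ag.1 k * lam ^ (k : ℕ)) +
            (∑' k : ℕ, ag.2.1 k * lam ^ k) * ∏ i : Fin n, (lam - μ i) :=
  stmt_0_general (one_pos.trans hρ) μ hμ h hh
end

section
/- Let ρ > 1 be real, let h : ℕ → ℂ satisfy ∑ₖ |hₖ| ρᵏ < ∞, and let μ ∈ ℂ with |μ| < ρ. Define gⱼ = ∑_{k=j+1}^{∞} hₖ μ^{k−1−j} for j ∈ ℕ. Then (i) ∑ⱼ |gⱼ| ρʲ ≤ (∑ₖ |hₖ| ρᵏ) / (ρ − |μ|), and (ii) for every λ ∈ ℂ with |λ| < ρ and λ ≠ μ, one has ∑ⱼ gⱼ λʲ = (h(λ) − h(μ)) / (λ − μ), where h(λ) = ∑ₖ hₖ λᵏ. -/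
/-!
Summed along the antidiagonals `j + k = n`, the family `λ ^ j μ ^ k h (j + 1 + k)` telescopes, since
`(λ - μ) ∑_{j + k = n} λ ^ j μ ^ k = λ ^ (n + 1) - μ ^ (n + 1)`. This gives the value of
`∑ g j λ ^ j` by Fubini. The norm bound is the same identity over `ℝ`, for the majorising sequence
`‖h k‖` at the points `ρ` and `‖μ‖`.
-/

open Finset

theorem sub_mul_sum_antidiagonal_pow_mul_pow {R : Type*} [CommRing R] (x y : R) (n : ℕ) :
    (x - y) * ∑ p ∈ antidiagonal n, x ^ p.1 * y ^ p.2 = x ^ (n + 1) - y ^ (n + 1) := by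
  rw [Nat.sum_antidiagonal_eq_sum_range_succ (fun i j => x ^ i * y ^ j), mul_comm]
  simpa only [Nat.add_sub_cancel] using (Commute.all x y).geom_sum₂_mul (n + 1)

theorem sum_antidiagonal_pow_mul_pow_le {K : Type*} [Field K] [LinearOrder K]
    [IsStrictOrderedRing K] {x y : K} (hy : 0 ≤ y) (hyx : y < x) (n : ℕ) :
    ∑ p ∈ antidiagonal n, x ^ p.1 * y ^ p.2 ≤ x ^ (n + 1) / (x - y) := by
  rw [le_div_iff₀' (sub_pos.2 hyx), sub_mul_sum_antidiagonal_pow_mul_pow]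
  exact sub_le_self _ (pow_nonneg hy _)

theorem sum_antidiagonal_pow_mul_pow_smul {R M : Type*} [CommSemiring R] [AddCommMonoid M]
    [Module R M] (x y : R) (u : ℕ → M) (n : ℕ) :
    ∑ p ∈ antidiagonal n, (x ^ p.1 * y ^ p.2) • u (p.1 + 1 + p.2) =
      (∑ p ∈ antidiagonal n, x ^ p.1 * y ^ p.2) • u (n + 1) := by
  rw [sum_smul]
  refine sum_congr rfl fun p hp => ?_
  rw [add_right_comm, mem_antidiagonal.1 hp]

theorem sub_smul_sum_antidiagonal_pow_mul_pow_smul {R M : Type*} [CommRing R] [AddCommGroup M]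
    [Module R M] (x y : R) (u : ℕ → M) (n : ℕ) :
    (x - y) • ∑ p ∈ antidiagonal n, (x ^ p.1 * y ^ p.2) • u (p.1 + 1 + p.2) =
      x ^ (n + 1) • u (n + 1) - y ^ (n + 1) • u (n + 1) := by
  rw [sum_antidiagonal_pow_mul_pow_smul, smul_smul, sub_mul_sum_antidiagonal_pow_mul_pow, sub_smul]

theorem summable_prod_of_summable_sum_antidiagonal {A : Type*} [AddMonoid A] [HasAntidiagonal A]
    {f : A × A → ℝ} (hf : ∀ p, 0 ≤ f p) (hsum : Summable fun n => ∑ p ∈ antidiagonal n, f p) :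
    Summable f := by
  rw [← HasAntidiagonal.sigmaAntidiagonalEquivProd.summable_iff]
  refine (summable_sigma_of_nonneg fun _ => hf _).2
    ⟨fun n => (hasSum_fintype _).summable, hsum.congr fun n => ?_⟩
  exact (sum_finset_coe f _).symm.trans (tsum_fintype _).symm

theorem tsum_prod_eq_tsum_sum_antidiagonal {A E : Type*} [AddMonoid A] [HasAntidiagonal A]
    [AddCommMonoid E] [TopologicalSpace E] [ContinuousAdd E] [T3Space E]
    {f : A × A → E} (hf : Summable f) :
    ∑' p, f p = ∑' n, ∑ p ∈ antidiagonal n, f p := by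
  rw [← HasAntidiagonal.sigmaAntidiagonalEquivProd.tsum_eq f]
  refine ((HasAntidiagonal.sigmaAntidiagonalEquivProd.summable_iff.2 hf).tsum_sigma'
    fun n => (hasSum_fintype _).summable).trans (tsum_congr fun n => ?_)
  exact (tsum_fintype _).trans (sum_finset_coe f _)

section DiffQuotCoeff

variable {𝕜 E : Type*} [NormedField 𝕜] [NormedAddCommGroup E] [NormedSpace 𝕜 E]
  {ρ : ℝ} {h : ℕ → E} {lam μ : 𝕜}

/-- The `j`-th coefficient `gⱼ = ∑_{k > j} μ ^ (k - 1 - j) hₖ` of the power series in `λ` of the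
difference quotient `(h(λ) - h(μ)) / (λ - μ)`. The summation index is shifted by `j + 1`, and
the coefficients `hₖ` are allowed to be vectors. -/
noncomputable def diffQuotCoeff (h : ℕ → E) (μ : 𝕜) (j : ℕ) : E :=
  ∑' k, μ ^ k • h (j + 1 + k)

theorem norm_pow_smul_le (h : ℕ → E) (hlam : ‖lam‖ ≤ ρ) (k : ℕ) :
    ‖lam ^ k • h k‖ ≤ ‖h k‖ * ρ ^ k := by
  rw [norm_smul, norm_pow, mul_comm]
  gcongr

theorem summable_pow_smul [CompleteSpace E] (hh : Summable fun k => ‖h k‖ * ρ ^ k)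
    (hlam : ‖lam‖ ≤ ρ) : Summable fun k => lam ^ k • h k :=
  .of_norm_bounded hh (norm_pow_smul_le h hlam)

theorem summable_prod_pow_mul_pow_mul {a : ℕ → ℝ} {r s : ℝ} (ha : ∀ k, 0 ≤ a k)
    (hs : 0 ≤ s) (hsr : s < r) (har : Summable fun k => a k * r ^ k) :
    Summable fun p : ℕ × ℕ => r ^ p.1 * s ^ p.2 * a (p.1 + 1 + p.2) := by
  have hr : 0 ≤ r := hs.trans hsr.le
  have hterm (p : ℕ × ℕ) : 0 ≤ r ^ p.1 * s ^ p.2 * a (p.1 + 1 + p.2) :=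
    mul_nonneg (by positivity) (ha _)
  refine summable_prod_of_summable_sum_antidiagonal hterm <|
    .of_nonneg_of_le (fun n => sum_nonneg fun p _ => hterm p) (fun n => ?_)
      (((summable_nat_add_iff 1).2 har).div_const (r - s))
  calc ∑ p ∈ antidiagonal n, r ^ p.1 * s ^ p.2 * a (p.1 + 1 + p.2)
      = (∑ p ∈ antidiagonal n, r ^ p.1 * s ^ p.2) * a (n + 1) :=
        sum_antidiagonal_pow_mul_pow_smul r s a n
    _ ≤ r ^ (n + 1) / (r - s) * a (n + 1) :=
        mul_le_mul_of_nonneg_right (sum_antidiagonal_pow_mul_pow_le hs hsr n) (ha _)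
    _ = a (n + 1) * r ^ (n + 1) / (r - s) := by ring

theorem summable_norm_prod_pow_mul_pow_smul (hh : Summable fun k => ‖h k‖ * ρ ^ k)
    (hμ : ‖μ‖ < ρ) (hlam : ‖lam‖ ≤ ρ) :
    Summable fun p : ℕ × ℕ => ‖(lam ^ p.1 * μ ^ p.2) • h (p.1 + 1 + p.2)‖ := by
  refine .of_nonneg_of_le (fun _ => norm_nonneg _) (fun p => ?_)
    (summable_prod_pow_mul_pow_mul (fun k => norm_nonneg (h k)) (norm_nonneg μ) hμ hh)
  rw [norm_smul, norm_mul, norm_pow, norm_pow]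
  gcongr

theorem sub_smul_tsum_pow_smul_diffQuotCoeff [CompleteSpace E]
    (hh : Summable fun k => ‖h k‖ * ρ ^ k) (hμ : ‖μ‖ < ρ) (hlam : ‖lam‖ ≤ ρ) :
    (lam - μ) • ∑' j, lam ^ j • diffQuotCoeff h μ j = ∑' k, lam ^ k • h k - ∑' k, μ ^ k • h k := by
  have hprod : Summable fun p : ℕ × ℕ => (lam ^ p.1 * μ ^ p.2) • h (p.1 + 1 + p.2) :=
    (summable_norm_prod_pow_mul_pow_smul hh hμ hlam).of_norm
  have hsum_lam := summable_pow_smul hh hlam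
  have hsum_μ := summable_pow_smul hh hμ.le
  calc (lam - μ) • ∑' j, lam ^ j • diffQuotCoeff h μ j
      = (lam - μ) • ∑' p : ℕ × ℕ, (lam ^ p.1 * μ ^ p.2) • h (p.1 + 1 + p.2) := by
        simp_rw [hprod.tsum_prod, mul_smul, tsum_const_smul'', diffQuotCoeff]
    _ = ∑' n, (lam ^ (n + 1) • h (n + 1) - μ ^ (n + 1) • h (n + 1)) := by
        simp_rw [tsum_prod_eq_tsum_sum_antidiagonal hprod, ← tsum_const_smul'',
          sub_smul_sum_antidiagonal_pow_mul_pow_smul]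
    _ = ∑' k, lam ^ k • h k - ∑' k, μ ^ k • h k := by
        rw [← hsum_lam.tsum_sub hsum_μ, (hsum_lam.sub hsum_μ).tsum_eq_zero_add]
        simp

section Real

variable {a : ℕ → ℝ} {r s : ℝ}

theorem summable_diffQuotCoeff_mul_pow (ha : ∀ k, 0 ≤ a k) (hs : 0 ≤ s) (hsr : s < r)
    (har : Summable fun k => a k * r ^ k) : Summable fun j => diffQuotCoeff a s j * r ^ j := by
  refine (summable_prod_pow_mul_pow_mul ha hs hsr har).prod.congr fun j => ?_
  simp only [diffQuotCoeff, mul_assoc, tsum_mul_left, smul_eq_mul, mul_comm]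

theorem tsum_diffQuotCoeff_mul_pow_le (ha : ∀ k, 0 ≤ a k) (hs : 0 ≤ s) (hsr : s < r)
    (har : Summable fun k => a k * r ^ k) :
    ∑' j, diffQuotCoeff a s j * r ^ j ≤ (∑' k, a k * r ^ k) / (r - s) := by
  have hvalue : (r - s) * ∑' j, diffQuotCoeff a s j * r ^ j =
      ∑' k, a k * r ^ k - ∑' k, a k * s ^ k := by
    simpa only [smul_eq_mul, mul_comm] using sub_smul_tsum_pow_smul_diffQuotCoeff (h := a)
      (har.congr fun k => by rw [Real.norm_of_nonneg (ha k)])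
      ((Real.norm_of_nonneg hs).trans_lt hsr) (Real.norm_of_nonneg (hs.trans hsr.le)).le
  rw [le_div_iff₀' (sub_pos.2 hsr), hvalue]
  exact sub_le_self _ (tsum_nonneg fun k => mul_nonneg (ha k) (pow_nonneg hs k))

end Real

theorem norm_diffQuotCoeff_le (hh : Summable fun k => ‖h k‖ * ρ ^ k) (hμ : ‖μ‖ < ρ) (j : ℕ) :
    ‖diffQuotCoeff h μ j‖ ≤ diffQuotCoeff (fun k => ‖h k‖) ‖μ‖ j := by
  have hρ : 0 < ρ := (norm_nonneg μ).trans_lt hμ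
  have hrow : Summable fun k => ρ ^ j * ‖μ ^ k • h (j + 1 + k)‖ := by
    simpa only [norm_smul, norm_pow, mul_assoc] using
      (summable_prod_pow_mul_pow_mul (fun k => norm_nonneg (h k)) (norm_nonneg μ) hμ
        hh).prod_factor j
  refine (norm_tsum_le_tsum_norm ((summable_mul_left_iff (pow_pos hρ j).ne').1 hrow)).trans_eq ?_
  simp only [norm_smul, norm_pow, smul_eq_mul, diffQuotCoeff]

theorem summable_norm_diffQuotCoeff_mul_pow (hh : Summable fun k => ‖h k‖ * ρ ^ k)
    (hμ : ‖μ‖ < ρ) : Summable fun j => ‖diffQuotCoeff h μ j‖ * ρ ^ j := by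
  have hρ : 0 ≤ ρ := (norm_nonneg μ).trans hμ.le
  refine .of_nonneg_of_le (fun j => by positivity) (fun j => ?_)
    (summable_diffQuotCoeff_mul_pow (fun k => norm_nonneg (h k)) (norm_nonneg μ) hμ hh)
  gcongr
  exact norm_diffQuotCoeff_le hh hμ j

theorem tsum_norm_diffQuotCoeff_mul_pow_le (hh : Summable fun k => ‖h k‖ * ρ ^ k)
    (hμ : ‖μ‖ < ρ) :
    ∑' j, ‖diffQuotCoeff h μ j‖ * ρ ^ j ≤ (∑' k, ‖h k‖ * ρ ^ k) / (ρ - ‖μ‖) := by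
  have hρ : 0 ≤ ρ := (norm_nonneg μ).trans hμ.le
  refine ((summable_norm_diffQuotCoeff_mul_pow hh hμ).tsum_le_tsum (fun j => ?_)
    (summable_diffQuotCoeff_mul_pow (fun k => norm_nonneg (h k)) (norm_nonneg μ) hμ hh)).trans
      (tsum_diffQuotCoeff_mul_pow_le (fun k => norm_nonneg (h k)) (norm_nonneg μ) hμ hh)
  gcongr
  exact norm_diffQuotCoeff_le hh hμ j

theorem stmt_1_general [CompleteSpace E] (hh : Summable fun k => ‖h k‖ * ρ ^ k) (hμ : ‖μ‖ < ρ) :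
    (Summable (fun j => ‖diffQuotCoeff h μ j‖ * ρ ^ j) ∧
      ∑' j, ‖diffQuotCoeff h μ j‖ * ρ ^ j ≤ (∑' k, ‖h k‖ * ρ ^ k) / (ρ - ‖μ‖)) ∧
    ∀ lam : 𝕜, ‖lam‖ ≤ ρ →
      (lam - μ) • ∑' j, lam ^ j • diffQuotCoeff h μ j =
        ∑' k, lam ^ k • h k - ∑' k, μ ^ k • h k :=
  ⟨⟨summable_norm_diffQuotCoeff_mul_pow hh hμ, tsum_norm_diffQuotCoeff_mul_pow_le hh hμ⟩,
    fun _ hlam => sub_smul_tsum_pow_smul_diffQuotCoeff hh hμ hlam⟩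

end DiffQuotCoeff

/- STATEMENT 1: For `h` with `∑ ‖hₖ‖ ρᵏ < ∞` and `‖μ‖ < ρ`, the sequence
`gⱼ = ∑_{k=j+1}^∞ hₖ μ^{k-1-j}` satisfies
(i) `∑ⱼ ‖gⱼ‖ ρʲ ≤ (∑ₖ ‖hₖ‖ ρᵏ)/(ρ - ‖μ‖)` (in particular it is summable), and
(ii) `∑ⱼ gⱼ λʲ = (h(λ) - h(μ))/(λ - μ)` for `‖λ‖ < ρ`, `λ ≠ μ`. -/
theorem stmt_1 (ρ : ℝ) (hρ : 1 < ρ) (h : ℕ → ℂ)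
    (hh : Summable (fun k => ‖h k‖ * ρ ^ k))
    (μ : ℂ) (hμ : ‖μ‖ < ρ)
    (g : ℕ → ℂ) (hg : ∀ j : ℕ, g j = ∑' k : ℕ, h (j + 1 + k) * μ ^ k) :
    (Summable (fun j => ‖g j‖ * ρ ^ j) ∧
      (∑' j : ℕ, ‖g j‖ * ρ ^ j) ≤ (∑' k : ℕ, ‖h k‖ * ρ ^ k) / (ρ - ‖μ‖)) ∧
    ∀ lam : ℂ, ‖lam‖ < ρ → lam ≠ μ →
      (∑' j : ℕ, g j * lam ^ j) =
        ((∑' k : ℕ, h k * lam ^ k) - (∑' k : ℕ, h k * μ ^ k)) / (lam - μ) := by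
  obtain rfl : g = diffQuotCoeff h μ :=
    funext fun j => by simp only [hg, diffQuotCoeff, smul_eq_mul, mul_comm]
  refine (stmt_1_general hh hμ).imp_right fun hvalue lam hlam hne => ?_
  rw [eq_div_iff (sub_ne_zero.2 hne)]
  simpa only [smul_eq_mul, mul_comm] using hvalue lam hlam.le
end

section
/- Let M₁, M₂, M₃, M₄ ∈ SL(2,ℂ) satisfy M₁M₂M₃M₄ = Id and trace(M₁) = trace(M₂) = trace(M₃) = trace(M₄) = s. Set u = trace(M₁M₂), v = trace(M₂M₃), w = trace(M₁M₃). Then u² + v² + w² + u·v·w − 2s²(u + v + w) + 4(s² − 1) + s⁴ = 0. -/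
/-!
For `2 × 2` matrices `adj A = tr A - A`, so `tr X * tr Y = tr (X Y) + tr (X adj Y)`. With `X = ABC`
and `Y = ACB` this expresses the product `tr (ABC) * tr (ACB)` through traces and determinants of
`A`, `B`, `C` and traces of their pairwise products; the polarized Cayley–Hamilton identity does
the same for the sum `tr (ABC) + tr (ACB)`. Hence `tr (ABC)` is a root of an explicit monic
quadratic. If `ABCD = 1` and the determinants are `1`, then `D = adj (ABC)` has the same trace as
`ABC`, and the quadratic equation becomes the Vogt–Fricke relation.
-/

open Matrix

theorem trace_mul_mul_adjugate {n R : Type*} [Fintype n] [DecidableEq n] [CommRing R]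
    (A B : Matrix n n R) : (A * B * A.adjugate).trace = A.det * B.trace := by
  rw [trace_mul_cycle, adjugate_mul, smul_one_mul, trace_smul, smul_eq_mul]

section FinTwo

variable {R : Type*} [CommRing R] (A B C : Matrix (Fin 2) (Fin 2) R)

theorem adjugate_fin_two_eq_trace_smul_one_sub : A.adjugate = A.trace • 1 - A := by
  ext i j
  fin_cases i <;> fin_cases j <;> simp [adjugate_fin_two, trace_fin_two]

theorem trace_adjugate_fin_two : A.adjugate.trace = A.trace := by
  rw [adjugate_fin_two, trace_fin_two_of, trace_fin_two, add_comm]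

theorem trace_eq_trace_of_mul_eq_one_fin_two {A B : Matrix (Fin 2) (Fin 2) R}
    (hA : A.det = 1) (hAB : A * B = 1) : B.trace = A.trace := by
  rw [← inv_eq_right_inv hAB, inv_def, hA, Ring.inverse_one, one_smul, trace_adjugate_fin_two]

theorem trace_mul_adjugate_fin_two :
    (A * B.adjugate).trace = A.trace * B.trace - (A * B).trace := by
  simp [adjugate_fin_two_eq_trace_smul_one_sub, mul_sub, mul_comm]

theorem trace_mul_self_fin_two : (A * A).trace = A.trace ^ 2 - 2 * A.det := by
  have h := trace_mul_adjugate_fin_two A A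
  rw [mul_adjugate, trace_smul, trace_one, Fintype.card_fin, smul_eq_mul, Nat.cast_ofNat] at h
  linear_combination h

theorem trace_adjugate_mul_adjugate_self_fin_two :
    (A.adjugate * A.adjugate).trace = A.trace ^ 2 - 2 * A.det := by
  rw [← adjugate_mul_distrib, trace_adjugate_fin_two, trace_mul_self_fin_two]

theorem mul_add_mul_swap_fin_two :
    A * B + B * A =
      A.trace • B + B.trace • A + ((A * B).trace - A.trace * B.trace) • 1 := by
  have h : (A * B).trace • 1 - A * B = (B.trace • 1 - B) * (A.trace • 1 - A) := by
    simp only [← adjugate_fin_two_eq_trace_smul_one_sub, adjugate_mul_distrib]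
  simp only [sub_mul, mul_sub, smul_mul_assoc, mul_smul_comm, one_mul, mul_one] at h
  linear_combination (norm := module) -h

theorem mul_mul_self_fin_two : A * B * A = (A * B).trace • A - A.det • B.adjugate := by
  have h : A * B * A + B.adjugate * (A.adjugate * A) = (A * B).trace • A := by
    rw [← mul_assoc, ← adjugate_mul_distrib, ← add_mul,
      adjugate_fin_two_eq_trace_smul_one_sub, add_sub_cancel, smul_one_mul]
  rw [← h, adjugate_mul, mul_smul_comm, mul_one, add_sub_cancel_right]

theorem trace_mul_mul_add_trace_mul_mul_swap_fin_two :
    (A * B * C).trace + (A * C * B).trace =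
      A.trace * (B * C).trace + B.trace * (A * C).trace + C.trace * (A * B).trace
        - A.trace * B.trace * C.trace := by
  have h := congr_arg (fun X ↦ (A * X).trace) (mul_add_mul_swap_fin_two B C)
  simp only [mul_add, mul_smul_comm, mul_one, ← mul_assoc, trace_add, trace_smul,
    smul_eq_mul] at h
  linear_combination h

theorem trace_mul_mul_adjugate_mul_adjugate_fin_two :
    (A * B * A.adjugate * B.adjugate).trace =
      A.trace ^ 2 * B.det + B.trace ^ 2 * A.det + (A * B).trace ^ 2
        - A.trace * B.trace * (A * B).trace - 2 * A.det * B.det := by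
  have hmul : (A * B * A.adjugate * B).trace =
      (A * B).trace * (A.trace * B.trace - (A * B).trace)
        - B.det * (A.trace ^ 2 - 2 * A.det) := by
    calc (A * B * A.adjugate * B).trace
        = (B * A * B * A.adjugate).trace := by
          rw [trace_mul_comm]; simp only [mul_assoc]
      _ = (B * A).trace * (B * A.adjugate).trace
            - B.det * (A.adjugate * A.adjugate).trace := by
          rw [mul_mul_self_fin_two, sub_mul, trace_sub, smul_mul_assoc, smul_mul_assoc,
            trace_smul, trace_smul, smul_eq_mul, smul_eq_mul]
      _ = _ := by
          rw [trace_mul_adjugate_fin_two, trace_adjugate_mul_adjugate_self_fin_two,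
            trace_mul_comm B A, mul_comm B.trace]
  rw [trace_mul_adjugate_fin_two, trace_mul_mul_adjugate, hmul]
  ring

theorem trace_mul_mul_mul_mul_mul_mul_swap_fin_two :
    (A * B * C * (A * C * B)).trace =
      (A * B).trace * (B * C).trace * (A * C).trace
        - C.det * (A * B).trace * (A.trace * B.trace - (A * B).trace)
        - B.det * (A * C).trace * (A.trace * C.trace - (A * C).trace)
        + B.det * C.det * (A.trace ^ 2 - 2 * A.det) := by
  calc (A * B * C * (A * C * B)).trace
      = (B * A * B * (C * A * C)).trace := by
        rw [← mul_assoc, trace_mul_comm]; simp only [mul_assoc]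
    _ = (B * A).trace * (C * A).trace * (B * C).trace
          - C.det * (B * A).trace * (B * A.adjugate).trace
          - B.det * (C * A).trace * (C * A.adjugate).trace
          + B.det * C.det * (A.adjugate * A.adjugate).trace := by
        simp only [mul_mul_self_fin_two, sub_mul, mul_sub, smul_mul_assoc, mul_smul_comm,
          trace_sub, trace_smul, smul_eq_mul, trace_mul_comm A.adjugate C]
        ring
    _ = _ := by
        rw [trace_mul_adjugate_fin_two, trace_mul_adjugate_fin_two,
          trace_adjugate_mul_adjugate_self_fin_two, trace_mul_comm B A, trace_mul_comm C A]
        ring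

theorem trace_mul_mul_mul_trace_mul_mul_swap_fin_two :
    (A * B * C).trace * (A * C * B).trace =
      A.trace ^ 2 * B.det * C.det + B.trace ^ 2 * A.det * C.det + C.trace ^ 2 * A.det * B.det
        + (A * B).trace ^ 2 * C.det + (B * C).trace ^ 2 * A.det + (A * C).trace ^ 2 * B.det
        - A.trace * B.trace * (A * B).trace * C.det - B.trace * C.trace * (B * C).trace * A.det
        - A.trace * C.trace * (A * C).trace * B.det
        + (A * B).trace * (B * C).trace * (A * C).trace - 4 * A.det * B.det * C.det := by
  have hcomm : (A * B * C * (A * C * B).adjugate).trace =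
      A.det * (B * C * B.adjugate * C.adjugate).trace := by
    calc (A * B * C * (A * C * B).adjugate).trace
        = (A * (B * C * B.adjugate * C.adjugate) * A.adjugate).trace := by
          simp only [adjugate_mul_distrib, mul_assoc]
      _ = A.det * (B * C * B.adjugate * C.adjugate).trace :=
          trace_mul_mul_adjugate A _
  have h := trace_mul_adjugate_fin_two (A * B * C) (A * C * B)
  rw [hcomm, trace_mul_mul_adjugate_mul_adjugate_fin_two,
    trace_mul_mul_mul_mul_mul_mul_swap_fin_two] at h
  linear_combination -h

end FinTwo

theorem stmt_2_general {R : Type*} [CommRing R] (M₁ M₂ M₃ M₄ : Matrix (Fin 2) (Fin 2) R)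
    (hdet₁ : M₁.det = 1) (hdet₂ : M₂.det = 1) (hdet₃ : M₃.det = 1)
    (hprod : M₁ * M₂ * M₃ * M₄ = 1)
    (a b c d : R) (ha : M₁.trace = a) (hb : M₂.trace = b) (hc : M₃.trace = c)
    (hd : M₄.trace = d)
    (u v w : R) (hu : (M₁ * M₂).trace = u) (hv : (M₂ * M₃).trace = v)
    (hw : (M₁ * M₃).trace = w) :
    u ^ 2 + v ^ 2 + w ^ 2 + u * v * w
      - (a * b + c * d) * u - (b * c + a * d) * v - (a * c + b * d) * w
      + a ^ 2 + b ^ 2 + c ^ 2 + d ^ 2 + a * b * c * d - 4 = 0 := by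
  have hdet : (M₁ * M₂ * M₃).det = 1 := by simp [hdet₁, hdet₂, hdet₃]
  have htrace : (M₁ * M₂ * M₃).trace = d :=
    (trace_eq_trace_of_mul_eq_one_fin_two hdet hprod).symm.trans hd
  have hsum := trace_mul_mul_add_trace_mul_mul_swap_fin_two M₁ M₂ M₃
  have hmul := trace_mul_mul_mul_trace_mul_mul_swap_fin_two M₁ M₂ M₃
  rw [htrace, ha, hb, hc, hu, hv, hw] at hsum hmul
  rw [hdet₁, hdet₂, hdet₃] at hmul
  linear_combination d * hsum - hmul

/- STATEMENT 2: The Vogt–Fricke trace relation for `M₁M₂M₃M₄ = Id` in `SL(2,ℂ)`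
with equal traces `s`: with `u = tr(M₁M₂)`, `v = tr(M₂M₃)`, `w = tr(M₁M₃)`,
`u² + v² + w² + uvw - 2s²(u+v+w) + 4(s²-1) + s⁴ = 0`. -/
theorem stmt_2 (M₁ M₂ M₃ M₄ : Matrix (Fin 2) (Fin 2) ℂ)
    (hdet₁ : M₁.det = 1) (hdet₂ : M₂.det = 1) (hdet₃ : M₃.det = 1) (hdet₄ : M₄.det = 1)
    (hprod : M₁ * M₂ * M₃ * M₄ = 1)
    (s : ℂ) (hs₁ : M₁.trace = s) (hs₂ : M₂.trace = s) (hs₃ : M₃.trace = s)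
    (hs₄ : M₄.trace = s)
    (u v w : ℂ) (hu : (M₁ * M₂).trace = u) (hv : (M₂ * M₃).trace = v)
    (hw : (M₁ * M₃).trace = w) :
    u ^ 2 + v ^ 2 + w ^ 2 + u * v * w - 2 * s ^ 2 * (u + v + w) +
      4 * (s ^ 2 - 1) + s ^ 4 = 0 := by
  linear_combination stmt_2_general M₁ M₂ M₃ M₄ hdet₁ hdet₂ hdet₃ hprod s s s s hs₁ hs₂ hs₃ hs₄
    u v w hu hv hw
end

section
/- Let D = diag(i, −i) ∈ SL(2,ℂ) and let M₁, M₂, M₃, M₄ ∈ SL(2,ℂ) satisfy M₁M₂M₃M₄ = Id, M₃ = D⁻¹M₁D and M₄ = D⁻¹M₂D. Assume moreover: trace(M₁) = trace(M₂) = s where s is real with −2 < s < 2; trace(M₁M₂) and trace(M₂M₃) are real and lie in the open interval (−2, 2); and trace(M₁M₃) and trace(M₂M₄) are real. Then the quadruple is unitarizable by a diagonal matrix: there exists an invertible diagonal matrix T ∈ GL(2,ℂ) such that T Mₖ T⁻¹ ∈ SU(2) for all k = 1, …, 4. -/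
/-!
Write `M₁ = !![σ + x, b; c, σ - x]` and `M₂ = !![σ + y, f; g, σ - y]`. Conjugation by `D` negates
the off-diagonal entries, so the traces of `M₁M₂` and `M₂M₃` determine `xy` and `bg + cf`. As
`(M₁M₂D⁻¹)² = -1`, the matrix `M₁M₂D⁻¹` has trace zero, which determines `cf - bg`. Eliminating
the off-diagonal entries gives `4(x + y)² = -(2 - tr M₁M₂)(2 - tr M₂M₃) < 0`. As `xy` and `x²`
(from the trace of `M₁M₃`) are real, `x` and `y` are purely imaginary and `cf` is the conjugate
of `bg`. An AM-GM estimate shows that `bc < 0` or `fg < 0`, so there is `k > 0` with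
`c = -k * conj b` and `g = -k * conj f`. Thus `M₁` and `M₂` preserve the Hermitian form
`diag(k, 1)`, and `T = diag(√k, 1)` makes them unitary. Since `D` is unitary and commutes with `T`,
the same `T` works for `M₃` and `M₄`.
-/

open Matrix Complex ComplexConjugate

section Unitary

variable {n R : Type*} [Fintype n] [DecidableEq n] [CommRing R] [StarRing R]

theorem mul_mul_inv_mem_unitaryGroup_of_star_mul_mul {T M : Matrix n n R} (hT : IsUnit T)
    (hM : star M * (star T * T) * M = star T * T) : T * M * T⁻¹ ∈ unitaryGroup n R := by
  have hTinv : T * T⁻¹ = 1 := mul_nonsing_inv T ((isUnit_iff_isUnit_det T).1 hT)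
  rw [mem_unitaryGroup_iff']
  calc star (T * M * T⁻¹) * (T * M * T⁻¹)
      = star T⁻¹ * (star M * (star T * T) * M) * T⁻¹ := by simp only [star_mul, mul_assoc]
    _ = star (T * T⁻¹) * (T * T⁻¹) := by rw [hM]; simp only [star_mul, mul_assoc]
    _ = 1 := by rw [hTinv, star_one, one_mul]

theorem conj_mem_unitaryGroup_of_commute {T M U : Matrix n n R} (hU : U ∈ unitaryGroup n R)
    (hTU : Commute T U) (hM : T * M * T⁻¹ ∈ unitaryGroup n R) :
    T * (U⁻¹ * M * U) * T⁻¹ ∈ unitaryGroup n R := by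
  have hUinv : U⁻¹ = star U := inv_eq_right_inv (mem_unitaryGroup_iff.1 hU)
  have hT_Uinv : T * U⁻¹ = U⁻¹ * T := by simpa using (Matrix.Commute.zpow_right hTU (-1)).eq
  have hU_Tinv : U * T⁻¹ = T⁻¹ * U := by simpa using (Matrix.Commute.zpow_right hTU.symm (-1)).eq
  have hconj : T * (U⁻¹ * M * U) * T⁻¹ = star U * (T * M * T⁻¹) * U := by
    calc T * (U⁻¹ * M * U) * T⁻¹ = T * U⁻¹ * M * (U * T⁻¹) := by simp only [mul_assoc]
      _ = star U * (T * M * T⁻¹) * U := by rw [hT_Uinv, hU_Tinv, hUinv]; simp only [mul_assoc]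
  rw [hconj]
  exact mul_mem (mul_mem (Unitary.star_mem hU) hM) hU

end Unitary

theorem trace_eq_zero_of_mul_self_eq_neg_one {R : Type*} [CommRing R]
    {Q : Matrix (Fin 2) (Fin 2) R} (hdet : Q.det = 1) (hQ : Q * Q = -1) : Q.trace = 0 := by
  nontriviality R
  have cayley_hamilton : Q * Q - Q.trace • Q + 1 = 0 := by
    have h := aeval_self_charpoly Q
    simpa [charpoly_fin_two, hdet, sq, Algebra.algebraMap_eq_smul_one] using h
  have htrace : Q.trace • Q = 0 := by
    rwa [hQ, neg_sub_left, neg_add_eq_zero, add_eq_right] at cayley_hamilton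
  have hone : Q.trace • (1 : Matrix (Fin 2) (Fin 2) R) = 0 := by
    calc Q.trace • (1 : Matrix (Fin 2) (Fin 2) R) = (Q.trace • Q) * Q.adjugate := by
          rw [smul_mul_assoc, mul_adjugate, hdet, one_smul]
      _ = 0 := by rw [htrace, zero_mul]
  simpa using congrFun (congrFun hone 0) 0

/-- The matrix `D = diag(i, -i)`, whose conjugation action gives the symmetry of the quadruple. -/
abbrev diagI : Matrix (Fin 2) (Fin 2) ℂ := !![I, 0; 0, -I]

theorem diagI_mul_diagI : diagI * diagI = -1 := by
  ext i j; fin_cases i <;> fin_cases j <;> simp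

theorem inv_diagI : diagI⁻¹ = -diagI :=
  inv_eq_right_inv (by rw [mul_neg, diagI_mul_diagI, neg_neg])

theorem diagI_mul_inv_diagI : diagI * diagI⁻¹ = 1 := by
  rw [inv_diagI, mul_neg, diagI_mul_diagI, neg_neg]

theorem diagI_mem_unitaryGroup : diagI ∈ unitaryGroup (Fin 2) ℂ := by
  rw [mem_unitaryGroup_iff]
  ext i j; fin_cases i <;> fin_cases j <;> simp [mul_apply, star_apply]

theorem commute_diagonal_diagI (v : Fin 2 → ℂ) : Commute (diagonal v) diagI := by
  ext i j; fin_cases i <;> fin_cases j <;> simp [mul_comm]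

theorem inv_diagI_mul_mul_diagI (a b c d : ℂ) :
    diagI⁻¹ * !![a, b; c, d] * diagI = !![a, -b; -c, d] := by
  rw [inv_diagI]
  ext i j
  fin_cases i <;> fin_cases j <;> simp [mul_comm I, mul_assoc]

theorem apply_zero_zero_eq_apply_one_one_of_mul_conj_diagI {P : Matrix (Fin 2) (Fin 2) ℂ}
    (hdet : P.det = 1) (hP : P * (diagI⁻¹ * P * diagI) = 1) : P 0 0 = P 1 1 := by
  have hsq : (P * diagI⁻¹) * (P * diagI⁻¹) = -1 := by
    calc (P * diagI⁻¹) * (P * diagI⁻¹)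
        = P * (diagI⁻¹ * P * (diagI * diagI⁻¹)) * diagI⁻¹ := by
          rw [diagI_mul_inv_diagI, mul_one]; simp only [mul_assoc]
      _ = P * (diagI⁻¹ * P * diagI) * (diagI⁻¹ * diagI⁻¹) := by simp only [mul_assoc]
      _ = -1 := by rw [hP, one_mul, inv_diagI, neg_mul_neg, diagI_mul_diagI]
  have hdet' : (P * diagI⁻¹).det = 1 := by
    rw [det_mul, hdet, inv_diagI]
    simp [det_fin_two]
  have htrace := trace_eq_zero_of_mul_self_eq_neg_one hdet' hsq
  have hI : P 1 1 * I - P 0 0 * I = 0 := by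
    rw [← htrace, inv_diagI, trace_fin_two]
    simp [mul_apply]
    ring
  exact mul_right_cancel₀ I_ne_zero (sub_eq_zero.1 hI).symm

theorem exists_eq_of_trace_eq_two_mul {R : Type*} [CommRing R] {M : Matrix (Fin 2) (Fin 2) R}
    {σ : R} (h : M.trace = 2 * σ) : ∃ x b c, M = !![σ + x, b; c, σ - x] := by
  refine ⟨M 0 0 - σ, M 0 1, M 1 0, ?_⟩
  rw [trace_fin_two] at h
  have h₁₁ : σ - (M 0 0 - σ) = M 1 1 := by linear_combination -h
  rw [h₁₁, add_sub_cancel]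
  exact eta_fin_two M

theorem star_mul_diagonal_mul_self {a b c d : ℂ} {k : ℝ} (hdet : a * d - b * c = 1)
    (hd : d = conj a) (hc : c = -k * conj b) :
    star !![a, b; c, d] * diagonal ![(k : ℂ), 1] * !![a, b; c, d] = diagonal ![(k : ℂ), 1] := by
  subst hd hc
  ext i j
  fin_cases i <;> fin_cases j <;> simp [mul_apply, star_apply]
  · linear_combination k * hdet
  · ring
  · ring
  · linear_combination hdet

theorem star_diagonal_sqrt_mul_self {k : ℝ} (hk : 0 ≤ k) :
    star (diagonal ![(√k : ℂ), 1]) * diagonal ![(√k : ℂ), 1] = diagonal ![(k : ℂ), 1] := by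
  have hsqrt : (√k : ℂ) * √k = k := by exact_mod_cast Real.mul_self_sqrt hk
  ext i j; fin_cases i <;> fin_cases j <;> simp [star_eq_conjTranspose, hsqrt]

theorem re_eq_zero_of_add_sq_neg {x y : ℂ} {p q r : ℝ} (hr : r < 0) (hadd : (x + y) ^ 2 = r)
    (hmul : x * y = p) (hx : x ^ 2 = q) : x.re = 0 ∧ y.re = 0 := by
  have hadd_re := congrArg re hadd
  have hadd_im := congrArg im hadd
  have hmul_im := congrArg im hmul
  have hx_im := congrArg im hx
  simp only [sq, mul_re, mul_im, add_re, add_im, ofReal_re, ofReal_im]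
    at hadd_re hadd_im hmul_im hx_im
  have hsum_im : x.im + y.im ≠ 0 := by
    intro h0
    rw [h0] at hadd_re
    nlinarith [sq_nonneg (x.re + y.re)]
  have hsum_re : x.re + y.re = 0 :=
    (mul_eq_zero.1 (by linarith : (x.re + y.re) * (x.im + y.im) = 0)).resolve_right hsum_im
  have hx_re : x.re = 0 := by
    refine (mul_eq_zero.1 (?_ : x.re * (x.im + y.im) = 0)).resolve_right hsum_im
    linear_combination hmul_im + hx_im - x.im * hsum_re
  exact ⟨hx_re, by linarith⟩

theorem sq_lt_or_sq_lt_of_sq_add_le {K X Y : ℝ} (hK : 0 < K) (hpos : 0 < K + X * Y)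
    (hlt : K + X * Y < 2) (hsum : (X + Y) ^ 2 ≤ (K + X * Y) ^ 2) : X ^ 2 < K ∨ Y ^ 2 < K := by
  by_contra! ⟨hX, hY⟩
  have hsq : K ^ 2 ≤ (X * Y) ^ 2 := by
    rw [mul_pow, sq K]
    exact mul_le_mul hX hY hK.le (sq_nonneg X)
  have hle : K ≤ X * Y := by nlinarith [hsq]
  have am_gm : 4 * (X * Y) ≤ (K + X * Y) ^ 2 := by nlinarith [sq_nonneg (X - Y)]
  -- `(K + t)² - 4t` is negative at `t = K < 1` and decreasing up to `t = 2 - K`.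
  nlinarith [mul_nonneg (sub_nonneg.2 hle) (by linarith : 0 ≤ 4 - 3 * K - X * Y)]

theorem exists_pos_eq_neg_mul_conj {b c f g : ℂ} {r : ℝ} (hr : r < 0) (hfg : f * g = r)
    (h : conj (b * g) = c * f) : ∃ k : ℝ, 0 < k ∧ c = -k * conj b ∧ g = -k * conj f := by
  have hf : f ≠ 0 := by
    rintro rfl
    exact hr.ne (by simpa [eq_comm] using hfg)
  have hnormSq : (normSq f : ℂ) ≠ 0 := by simpa using hf
  have hg : g = -((-r / normSq f : ℝ) : ℂ) * conj f := by
    apply mul_left_cancel₀ hf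
    rw [mul_left_comm, mul_conj, hfg]
    push_cast
    field_simp
  refine ⟨-r / normSq f, div_pos (neg_pos.2 hr) (normSq_pos.2 hf), ?_, hg⟩
  apply mul_right_cancel₀ hf
  rw [← h, map_mul, hg]
  simp only [map_mul, map_neg, conj_ofReal, conj_conj]
  ring

theorem sq_add_eq_of_det_eq_one {F : Type*} [Field F] [NeZero (2 : F)] {σ x y b c f g n : F}
    (hA : (σ + x) * (σ - x) - b * c = 1) (hB : (σ + y) * (σ - y) - f * g = 1)
    (hsum : b * g + c * f = 2 * n) (hdiff : c * f - b * g = 2 * σ * (x + y)) :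
    (x + y) ^ 2 = n ^ 2 - (1 - σ ^ 2 - x * y) ^ 2 := by
  have hbg : b * g = n - σ * (x + y) :=
    mul_left_cancel₀ two_ne_zero (by linear_combination hsum - hdiff)
  have hcf : c * f = n + σ * (x + y) :=
    mul_left_cancel₀ two_ne_zero (by linear_combination hsum + hdiff)
  have hbc : b * c = σ ^ 2 - x ^ 2 - 1 := by linear_combination -hA
  have hfg : f * g = σ ^ 2 - y ^ 2 - 1 := by linear_combination -hB
  have hprod : (b * g) * (c * f) = (b * c) * (f * g) := by ring
  rw [hbg, hcf, hbc, hfg] at hprod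
  linear_combination -hprod

theorem exists_pos_eq_neg_mul_conj_of_mul_I {σ n X Y : ℝ} {b c f g : ℂ}
    (hA : (σ + X * I) * (σ - X * I) - b * c = 1) (hB : (σ + Y * I) * (σ - Y * I) - f * g = 1)
    (hsum : b * g + c * f = 2 * n) (hdiff : c * f - b * g = 2 * σ * (X * I + Y * I))
    (hσ : σ ^ 2 < 1) (hpos : 0 < 1 - σ ^ 2 + X * Y) (hlt : 1 - σ ^ 2 + X * Y < 2)
    (hsq : (X + Y) ^ 2 ≤ (1 - σ ^ 2 + X * Y) ^ 2) :
    ∃ k : ℝ, 0 < k ∧ c = -k * conj b ∧ g = -k * conj f := by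
  have hbc : b * c = ((X ^ 2 - (1 - σ ^ 2) : ℝ) : ℂ) := by
    push_cast
    linear_combination -hA - X ^ 2 * I_sq
  have hfg : f * g = ((Y ^ 2 - (1 - σ ^ 2) : ℝ) : ℂ) := by
    push_cast
    linear_combination -hB - Y ^ 2 * I_sq
  have hconj : conj (b * g) = c * f := by
    have hbg : b * g = n - σ * (X + Y) * I := by linear_combination hsum / 2 - hdiff / 2
    have hcf : c * f = n + σ * (X + Y) * I := by linear_combination hsum / 2 + hdiff / 2
    rw [hbg, hcf]
    simp
  rcases sq_lt_or_sq_lt_of_sq_add_le (sub_pos.2 hσ) hpos hlt hsq with hX | hY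
  · have hconj' : conj (f * c) = g * b := by rw [mul_comm f, ← hconj, conj_conj, mul_comm]
    obtain ⟨k, hk, hg, hc⟩ := exists_pos_eq_neg_mul_conj (sub_neg.2 hX) hbc hconj'
    exact ⟨k, hk, hc, hg⟩
  · exact exists_pos_eq_neg_mul_conj (sub_neg.2 hY) hfg hconj

theorem re_eq_zero_and_exists_pos_eq_neg_mul_conj {σ p q n : ℝ} {x y b c f g : ℂ}
    (hA : (σ + x) * (σ - x) - b * c = 1) (hB : (σ + y) * (σ - y) - f * g = 1)
    (hsum : b * g + c * f = 2 * n) (hdiff : c * f - b * g = 2 * σ * (x + y))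
    (hxy : x * y = p) (hx : x ^ 2 = q) (hσ : σ ^ 2 < 1)
    (hn : |n| < 1 - σ ^ 2 - p) (hp : 1 - σ ^ 2 - p < 2) :
    x.re = 0 ∧ y.re = 0 ∧ ∃ k : ℝ, 0 < k ∧ c = -k * conj b ∧ g = -k * conj f := by
  have hadd : (x + y) ^ 2 = ((n ^ 2 - (1 - σ ^ 2 - p) ^ 2 : ℝ) : ℂ) := by
    push_cast
    rw [← hxy]
    exact sq_add_eq_of_det_eq_one hA hB hsum hdiff
  have hneg : n ^ 2 - (1 - σ ^ 2 - p) ^ 2 < 0 :=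
    sub_neg.2 (sq_lt_sq.2 (hn.trans_le (le_abs_self _)))
  obtain ⟨hx_re, hy_re⟩ := re_eq_zero_of_add_sq_neg hneg hadd hxy hx
  refine ⟨hx_re, hy_re, ?_⟩
  obtain ⟨X, rfl⟩ : ∃ X : ℝ, x = X * I := ⟨x.im, by apply Complex.ext <;> simp [hx_re]⟩
  obtain ⟨Y, rfl⟩ : ∃ Y : ℝ, y = Y * I := ⟨y.im, by apply Complex.ext <;> simp [hy_re]⟩
  obtain rfl : p = -(X * Y) := by
    apply ofReal_injective
    push_cast
    linear_combination -hxy + X * Y * I_sq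
  have hXY_sq : (X + Y) ^ 2 = (1 - σ ^ 2 + X * Y) ^ 2 - n ^ 2 := by
    apply ofReal_injective
    push_cast at hadd ⊢
    linear_combination -hadd + (X + Y) ^ 2 * I_sq
  rw [sub_neg_eq_add] at hn hp
  exact exists_pos_eq_neg_mul_conj_of_mul_I hA hB hsum hdiff hσ ((abs_nonneg n).trans_lt hn) hp
    (by linarith [sq_nonneg n])

theorem exists_pos_star_mul_diagonal_mul_eq {A B : Matrix (Fin 2) (Fin 2) ℂ}
    (hdetA : A.det = 1) (hdetB : B.det = 1)
    (hprod : A * B * (diagI⁻¹ * (A * B) * diagI) = 1)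
    {s u v w : ℝ} (hs : s ^ 2 < 4) (htrA : A.trace = s) (htrB : B.trace = s)
    (hu : (A * B).trace = u) (hu_lt : u < 2)
    (hv : (B * (diagI⁻¹ * A * diagI)).trace = v) (hv_lt : v < 2) (huv : -4 < u + v)
    (hw : (A * (diagI⁻¹ * A * diagI)).trace = w) :
    ∃ k : ℝ, 0 < k ∧ star A * diagonal ![(k : ℂ), 1] * A = diagonal ![(k : ℂ), 1] ∧
      star B * diagonal ![(k : ℂ), 1] * B = diagonal ![(k : ℂ), 1] := by
  obtain ⟨σ, rfl⟩ : ∃ σ : ℝ, s = 2 * σ := ⟨s / 2, by ring⟩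
  push_cast at htrA htrB
  obtain ⟨x, b, c, rfl⟩ := exists_eq_of_trace_eq_two_mul htrA
  obtain ⟨y, f, g, rfl⟩ := exists_eq_of_trace_eq_two_mul htrB
  have hdiag := apply_zero_zero_eq_apply_one_one_of_mul_conj_diagI
    (by rw [det_mul, hdetA, hdetB, one_mul]) hprod
  rw [inv_diagI_mul_mul_diagI] at hv hw
  simp only [trace_fin_two, det_fin_two_of, mul_fin_two, of_apply, cons_val', cons_val_zero,
    cons_val_one, cons_val_fin_one] at hdetA hdetB hdiag hu hv hw
  obtain ⟨hx_re, hy_re, k, hk, hc, hg⟩ := re_eq_zero_and_exists_pos_eq_neg_mul_conj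
    (p := (u + v) / 4 - σ ^ 2) (q := (w - 2) / 4) (n := (u - v) / 4) hdetA hdetB
    (by push_cast; linear_combination (hu - hv) / 2) (by linear_combination -hdiag)
    (by push_cast; linear_combination (hu + hv) / 4)
    (by push_cast; linear_combination hw / 4 - hdetA / 2)
    (by linarith) (by rw [abs_lt]; constructor <;> linarith) (by linarith)
  have sub_eq_conj_add {z : ℂ} (hz : z.re = 0) : (σ : ℂ) - z = conj (σ + z) := by
    apply Complex.ext <;> simp [hz]
  exact ⟨k, hk, star_mul_diagonal_mul_self hdetA (sub_eq_conj_add hx_re) hc,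
    star_mul_diagonal_mul_self hdetB (sub_eq_conj_add hy_re) hg⟩

theorem stmt_4_general (M₁ M₂ M₃ M₄ : Matrix (Fin 2) (Fin 2) ℂ)
    (hdet₁ : M₁.det = 1) (hdet₂ : M₂.det = 1) (hprod : M₁ * M₂ * M₃ * M₄ = 1)
    (hM₃ : M₃ = diagI⁻¹ * M₁ * diagI) (hM₄ : M₄ = diagI⁻¹ * M₂ * diagI)
    (s : ℝ) (hs : -2 < s ∧ s < 2) (htr₁ : M₁.trace = s) (htr₂ : M₂.trace = s)
    (u : ℝ) (hu : (M₁ * M₂).trace = u) (hu_lt : u < 2)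
    (v : ℝ) (hv : (M₂ * M₃).trace = v) (hv_lt : v < 2) (huv : -4 < u + v)
    (hw : ∃ w : ℝ, (M₁ * M₃).trace = w) :
    ∃ T : Matrix (Fin 2) (Fin 2) ℂ, T.IsDiag ∧ IsUnit T ∧
      T * M₁ * T⁻¹ ∈ unitaryGroup (Fin 2) ℂ ∧ T * M₂ * T⁻¹ ∈ unitaryGroup (Fin 2) ℂ ∧
      T * M₃ * T⁻¹ ∈ unitaryGroup (Fin 2) ℂ ∧ T * M₄ * T⁻¹ ∈ unitaryGroup (Fin 2) ℂ := by
  subst hM₃ hM₄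
  obtain ⟨w, hw⟩ := hw
  have hprod' : M₁ * M₂ * (diagI⁻¹ * (M₁ * M₂) * diagI) = 1 := by
    calc M₁ * M₂ * (diagI⁻¹ * (M₁ * M₂) * diagI)
        = M₁ * M₂ * (diagI⁻¹ * M₁ * (diagI * diagI⁻¹) * M₂ * diagI) := by
          rw [diagI_mul_inv_diagI, mul_one]; simp only [mul_assoc]
      _ = 1 := by rw [← hprod]; simp only [mul_assoc]
  obtain ⟨k, hk, hform₁, hform₂⟩ := exists_pos_star_mul_diagonal_mul_eq hdet₁ hdet₂ hprod'
    (by nlinarith) htr₁ htr₂ hu hu_lt hv hv_lt huv hw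
  let T : Matrix (Fin 2) (Fin 2) ℂ := diagonal ![(√k : ℂ), 1]
  have hTT : star T * T = diagonal ![(k : ℂ), 1] := star_diagonal_sqrt_mul_self hk.le
  have hT : IsUnit T := by
    simp [T, isUnit_diagonal, Pi.isUnit_iff, Fin.forall_fin_two, hk.ne', hk.le]
  rw [← hTT] at hform₁ hform₂
  have hT₁ := mul_mul_inv_mem_unitaryGroup_of_star_mul_mul hT hform₁
  have hT₂ := mul_mul_inv_mem_unitaryGroup_of_star_mul_mul hT hform₂
  have hTD : Commute T diagI := commute_diagonal_diagI _
  exact ⟨T, isDiag_diagonal _, hT, hT₁, hT₂,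
    conj_mem_unitaryGroup_of_commute diagI_mem_unitaryGroup hTD hT₁,
    conj_mem_unitaryGroup_of_commute diagI_mem_unitaryGroup hTD hT₂⟩

/- STATEMENT 4: Unitarizability by a diagonal matrix for a symmetric quadruple in
`SL(2,ℂ)` with `M₁M₂M₃M₄ = Id`, `M₃ = D⁻¹M₁D`, `M₄ = D⁻¹M₂D` (`D = diag(i,-i)`),
equal real traces `s ∈ (-2,2)`, `tr(M₁M₂), tr(M₂M₃)` real in `(-2,2)` and
`tr(M₁M₃), tr(M₂M₄)` real. -/
theorem stmt_4 (M₁ M₂ M₃ M₄ : Matrix (Fin 2) (Fin 2) ℂ)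
    (hdet₁ : M₁.det = 1) (hdet₂ : M₂.det = 1) (hdet₃ : M₃.det = 1) (hdet₄ : M₄.det = 1)
    (hprod : M₁ * M₂ * M₃ * M₄ = 1)
    (hM₃ : M₃ = (!![Complex.I, 0; 0, -Complex.I])⁻¹ * M₁ * !![Complex.I, 0; 0, -Complex.I])
    (hM₄ : M₄ = (!![Complex.I, 0; 0, -Complex.I])⁻¹ * M₂ * !![Complex.I, 0; 0, -Complex.I])
    (s : ℝ) (hs : -2 < s ∧ s < 2)
    (htr₁ : M₁.trace = (s : ℂ)) (htr₂ : M₂.trace = (s : ℂ))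
    (u : ℝ) (hu : (M₁ * M₂).trace = (u : ℂ)) (hu' : -2 < u ∧ u < 2)
    (v : ℝ) (hv : (M₂ * M₃).trace = (v : ℂ)) (hv' : -2 < v ∧ v < 2)
    (hw₁ : ∃ w : ℝ, (M₁ * M₃).trace = (w : ℂ))
    (hw₂ : ∃ w : ℝ, (M₂ * M₄).trace = (w : ℂ)) :
    ∃ T : Matrix (Fin 2) (Fin 2) ℂ, T.IsDiag ∧ IsUnit T ∧
      T * M₁ * T⁻¹ ∈ Matrix.unitaryGroup (Fin 2) ℂ ∧
      T * M₂ * T⁻¹ ∈ Matrix.unitaryGroup (Fin 2) ℂ ∧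
      T * M₃ * T⁻¹ ∈ Matrix.unitaryGroup (Fin 2) ℂ ∧
      T * M₄ * T⁻¹ ∈ Matrix.unitaryGroup (Fin 2) ℂ := by
  exact stmt_4_general M₁ M₂ M₃ M₄ hdet₁ hdet₂ hprod hM₃ hM₄ s hs htr₁ htr₂ u hu hu'.2 v hv hv'.2
    (by linarith) hw₁
end

section
/- Let C = [[0, i], [i, 0]] and D = [[i, 0], [0, −i]] in SL(2,ℂ). Then for every P ∈ SL(2,ℂ) one has trace(−(P C P⁻¹ D)²) = 2 − 4(P₁₁P₂₁ − P₁₂P₂₂)², and for every Q ∈ SL(2,ℂ) one has trace(−(Q D C Q⁻¹ D)²) = 2 + 4(Q₁₁Q₂₁ + Q₁₂Q₂₂)², where the subscripts denote matrix entries. -/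
/-!
By Cayley–Hamilton `tr (-X²) = 2 det X - (tr X)²` for a `2 × 2` matrix `X`, so each coordinate is
determined by `det X` and `tr X` for `X = P A P⁻¹ D`. Both `A = C` and `A = D C` are antidiagonal,
hence one trace formula covers both cases. Writing `adj P` for `P⁻¹` turns both claims into
polynomial identities in the entries of `P`.
-/

namespace FrickeCoordinates

open Matrix

variable {n R : Type*} [Fintype n] [DecidableEq n] [CommRing R]

theorem trace_neg_sq_fin_two (X : Matrix (Fin 2) (Fin 2) R) :
    (-X ^ 2).trace = 2 * X.det - X.trace ^ 2 := by
  simp only [pow_two, trace_neg, trace_fin_two, det_fin_two, mul_apply, Fin.sum_univ_two]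
  ring

theorem det_mul_mul_adjugate_mul (P A B : Matrix n n R) :
    (P * A * P.adjugate * B).det = P.det ^ Fintype.card n * (A.det * B.det) := by
  have det_mul_det_adjugate : P.det * P.adjugate.det = P.det ^ Fintype.card n := by
    rw [← det_mul, mul_adjugate, det_smul, det_one, mul_one]
  rw [det_mul, det_mul, det_mul, ← det_mul_det_adjugate]
  ring

theorem inv_eq_adjugate_of_det_eq_one {P : Matrix n n R} (hP : P.det = 1) :
    P⁻¹ = P.adjugate := by
  rw [inv_def, hP, Ring.inverse_one, one_smul]

theorem trace_mul_antidiag_mul_adjugate_mul_diag (P : Matrix (Fin 2) (Fin 2) R) (b c d : R) :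
    (P * !![0, b; c, 0] * P.adjugate * !![d, 0; 0, -d]).trace =
      2 * d * (c * (P 0 1 * P 1 1) - b * (P 0 0 * P 1 0)) := by
  simp only [adjugate_fin_two, trace_fin_two, mul_apply, Fin.sum_univ_two, of_apply, cons_val_zero,
    cons_val_one, cons_val', cons_val_fin_one]
  ring

theorem trace_neg_sq_mul_antidiag_mul_adjugate_mul_diag (P : Matrix (Fin 2) (Fin 2) R)
    (b c d : R) :
    (-(P * !![0, b; c, 0] * P.adjugate * !![d, 0; 0, -d]) ^ 2).trace =
      2 * (P.det ^ 2 * (b * c * d ^ 2)) -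
        (2 * d * (c * (P 0 1 * P 1 1) - b * (P 0 0 * P 1 0))) ^ 2 := by
  rw [trace_neg_sq_fin_two, det_mul_mul_adjugate_mul, trace_mul_antidiag_mul_adjugate_mul_diag,
    Fintype.card_fin, det_fin_two_of, det_fin_two_of]
  ring

theorem diag_mul_antidiag_of_sq_eq_neg_one {i : R} (hi : i ^ 2 = -1) :
    !![i, 0; 0, -i] * !![0, i; i, 0] = !![0, -1; 1, 0] := by
  simp [← pow_two, hi]

end FrickeCoordinates

open FrickeCoordinates in
theorem stmt_5_general {R : Type*} [CommRing R] {i : R} (hi : i ^ 2 = -1)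
    (P Q : Matrix (Fin 2) (Fin 2) R) :
    (-(P * !![0, i; i, 0] * P.adjugate * !![i, 0; 0, -i]) ^ 2).trace =
      2 * P.det ^ 2 - 4 * (P 0 0 * P 1 0 - P 0 1 * P 1 1) ^ 2 ∧
    (-(Q * !![i, 0; 0, -i] * !![0, i; i, 0] * Q.adjugate * !![i, 0; 0, -i]) ^ 2).trace =
      2 * Q.det ^ 2 + 4 * (Q 0 0 * Q 1 0 + Q 0 1 * Q 1 1) ^ 2 := by
  have hi_four : i ^ 4 = 1 := by linear_combination (i ^ 2 - 1) * hi
  constructor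
  · rw [trace_neg_sq_mul_antidiag_mul_adjugate_mul_diag]
    linear_combination
      (2 * P.det ^ 2 - 4 * (P 0 0 * P 1 0 - P 0 1 * P 1 1) ^ 2) * hi_four
  · rw [Matrix.mul_assoc Q, diag_mul_antidiag_of_sq_eq_neg_one hi,
      trace_neg_sq_mul_antidiag_mul_adjugate_mul_diag]
    linear_combination
      (-2 * Q.det ^ 2 - 4 * (Q 0 0 * Q 1 0 + Q 0 1 * Q 1 1) ^ 2) * hi

/- STATEMENT 5: Fricke-type coordinates: with `C = [[0,i],[i,0]]`, `D = diag(i,-i)`,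
for `P, Q ∈ SL(2,ℂ)`:
`trace(-(P C P⁻¹ D)²) = 2 - 4(P₁₁P₂₁ - P₁₂P₂₂)²` and
`trace(-(Q D C Q⁻¹ D)²) = 2 + 4(Q₁₁Q₂₁ + Q₁₂Q₂₂)²`. -/
theorem stmt_5 (P Q : Matrix (Fin 2) (Fin 2) ℂ) (hP : P.det = 1) (hQ : Q.det = 1) :
    (-(P * !![0, Complex.I; Complex.I, 0] * P⁻¹ *
        !![Complex.I, 0; 0, -Complex.I]) ^ 2).trace =
      2 - 4 * (P 0 0 * P 1 0 - P 0 1 * P 1 1) ^ 2 ∧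
    (-(Q * !![Complex.I, 0; 0, -Complex.I] * !![0, Complex.I; Complex.I, 0] * Q⁻¹ *
        !![Complex.I, 0; 0, -Complex.I]) ^ 2).trace =
      2 + 4 * (Q 0 0 * Q 1 0 + Q 0 1 * Q 1 1) ^ 2 := by
  simpa only [FrickeCoordinates.inv_eq_adjugate_of_det_eq_one, hP, hQ, one_pow, mul_one] using
    stmt_5_general Complex.I_sq P Q
end

section
/- Let φ ∈ (0, π/2). Then the integrals along the real segment [0,1] satisfy: ∫₀¹ F_a(t) dt = i(π − 2φ), ∫₀¹ F_b(t) dt = log((1 − cos φ)/(1 + cos φ)), and ∫₀¹ F_c(t) dt = iπ. -/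
noncomputable section

/-- `p₁ = e^{iφ}` -/
def p₁ (φ : ℝ) : ℂ := Complex.exp (Complex.I * (φ : ℂ))
/-- `p₂ = -e^{-iφ}` -/
def p₂ (φ : ℝ) : ℂ := -Complex.exp (-(Complex.I * (φ : ℂ)))
/-- `p₃ = -e^{iφ}` -/
def p₃ (φ : ℝ) : ℂ := -p₁ φ
/-- `p₄ = e^{-iφ}` -/
def p₄ (φ : ℝ) : ℂ := Complex.exp (-(Complex.I * (φ : ℂ)))

def Fa (φ : ℝ) (z : ℂ) : ℂ :=
  1 / (z - p₁ φ) - 1 / (z - p₂ φ) + 1 / (z - p₃ φ) - 1 / (z - p₄ φ)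

def Fb (φ : ℝ) (z : ℂ) : ℂ :=
  1 / (z - p₁ φ) - 1 / (z - p₂ φ) - 1 / (z - p₃ φ) + 1 / (z - p₄ φ)

def Fc (φ : ℝ) (z : ℂ) : ℂ :=
  1 / (z - p₁ φ) + 1 / (z - p₂ φ) - 1 / (z - p₃ φ) - 1 / (z - p₄ φ)

/-! Along `[0, 1]` a simple pole `e^{iθ}` with `0 < θ < 2π` contributes
`log (1 - e^{-iθ}) = log (2 sin (θ / 2)) + i (π - θ) / 2`; the principal branch is the right one
because the pole lies off the segment. The poles `p₁, p₂, p₃, p₄` have arguments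
`φ, π - φ, π + φ, 2π - φ`, so the contributions of `p₁, p₄` are complex conjugates, as are those of
`p₂, p₃`. The signs in `Fa`, `Fb`, `Fc` decide which real and imaginary parts cancel. -/

section UnitCirclePoles

open Complex Set

lemma ofReal_sub_div_ofReal_sub_mem_slitPlane {a b : ℝ} {p : ℂ} (hp : ∀ t ∈ uIcc a b, (t : ℂ) ≠ p) :
    ((b : ℂ) - p) / (a - p) ∈ slitPlane := by
  have hap : (a : ℂ) - p ≠ 0 := sub_ne_zero.mpr (hp a left_mem_uIcc)
  by_contra hmem
  obtain ⟨s, hs, hquot⟩ : ∃ s : ℝ, 0 ≤ s ∧ ((b : ℂ) - p) / (a - p) = -s := by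
    simp only [mem_slitPlane_iff, not_or, not_lt, not_not] at hmem
    exact ⟨_, neg_nonneg.mpr hmem.1, Complex.ext (by simp) (by simp [hmem.2])⟩
  have hs' : 0 < 1 + s := by positivity
  -- `b - p = -s (a - p)` exhibits `p` as a convex combination of `a` and `b`.
  refine hp ((1 / (1 + s)) • b + (s / (1 + s)) • a) ?_ ?_
  · exact convex_uIcc a b right_mem_uIcc left_mem_uIcc (by positivity) (by positivity)
      (by field_simp)
  · have hne : (1 + s : ℂ) ≠ 0 := mod_cast hs'.ne'
    have hlin : (b : ℂ) - p = -s * (a - p) := (div_eq_iff hap).mp hquot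
    push_cast [smul_eq_mul]
    field_simp
    linear_combination hlin

lemma intervalIntegrable_one_div_ofReal_sub {a b : ℝ} {p : ℂ}
    (hp : ∀ t ∈ uIcc a b, (t : ℂ) ≠ p) :
    IntervalIntegrable (fun t : ℝ ↦ 1 / ((t : ℂ) - p)) MeasureTheory.volume a b :=
  ContinuousOn.intervalIntegrable <|
    continuousOn_const.div (by fun_prop) fun t ht ↦ sub_ne_zero.mpr (hp t ht)

lemma integral_one_div_ofReal_sub {a b : ℝ} {p : ℂ} (hp : ∀ t ∈ uIcc a b, (t : ℂ) ≠ p) :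
    ∫ t in a..b, 1 / ((t : ℂ) - p) = log ((b - p) / (a - p)) := by
  have hap : (a : ℂ) - p ≠ 0 := sub_ne_zero.mpr (hp a left_mem_uIcc)
  have hquot : ((b : ℂ) - p) / (a - p) = 1 + (b - a) / (a - p) := by
    field_simp
    ring
  calc ∫ t in a..b, 1 / ((t : ℂ) - p)
      = (b - a) • ∫ s in (0 : ℝ)..1, 1 / (((a + (b - a) * s : ℝ) : ℂ) - p) := by
        rw [intervalIntegral.smul_integral_comp_add_mul (fun t : ℝ ↦ 1 / ((t : ℂ) - p))]
        simp only [mul_zero, mul_one, add_zero, add_sub_cancel]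
    _ = (b - a) / (a - p) * ∫ s in (0 : ℝ)..1, (1 + s • (((b : ℂ) - a) / (a - p)))⁻¹ := by
        rw [← intervalIntegral.integral_smul, ← intervalIntegral.integral_const_mul]
        congr with s
        have hfactor : ((a + (b - a) * s : ℝ) : ℂ) - p
            = (a - p) * (1 + s • (((b : ℂ) - a) / (a - p))) := by
          push_cast [real_smul]
          field_simp
          ring
        rw [hfactor, real_smul, one_div, mul_inv, div_eq_mul_inv]
        push_cast
        ring
    _ = log ((b - p) / (a - p)) := by
        rw [hquot, log_eq_integral (hquot ▸ ofReal_sub_div_ofReal_sub_mem_slitPlane hp)]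

lemma one_sub_exp_neg_mul_I (z : ℂ) :
    1 - exp (-(z * I)) = 2 * sin (z / 2) * exp ((Real.pi - z) / 2 * I) := by
  have hI : exp ((Real.pi - z) / 2 * I) = I * exp (-(z / 2 * I)) := by
    rw [show (Real.pi - z) / 2 * I = Real.pi / 2 * I + -(z / 2 * I) by ring, exp_add,
      exp_pi_div_two_mul_I]
  have hsq : exp (-(z * I)) = exp (-(z / 2 * I)) * exp (-(z / 2 * I)) := by
    rw [← exp_add]
    ring_nf
  have hinv : exp (-(z / 2 * I)) * exp (z / 2 * I) = 1 := by
    rw [← exp_add, neg_add_cancel, exp_zero]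
  rw [hI, hsq, sin, neg_mul]
  linear_combination
    (exp (-(z / 2 * I)) * exp (z / 2 * I) - exp (-(z / 2 * I)) ^ 2) * I_sq - hinv

variable {θ : ℝ}

lemma log_one_sub_exp_neg_mul_I (hθ : θ ∈ Ioo 0 (2 * Real.pi)) :
    log (1 - exp (-(θ * I))) =
      Real.log (2 * Real.sin (θ / 2)) + (Real.pi - θ) / 2 * I := by
  have hsin : 0 < 2 * Real.sin (θ / 2) :=
    mul_pos two_pos (Real.sin_pos_of_pos_of_lt_pi (by linarith [hθ.1]) (by linarith [hθ.2]))
  have hpolar : 1 - exp (-(θ * I)) =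
      (2 * Real.sin (θ / 2) : ℝ) * exp (((Real.pi - θ) / 2 : ℝ) * I) := by
    simpa using one_sub_exp_neg_mul_I θ
  rw [hpolar, log_ofReal_mul hsin (exp_ne_zero _), log_exp]
  · push_cast
    rfl
  · rw [im_ofReal_mul, I_im]
    linarith [hθ.2, Real.pi_pos]
  · rw [im_ofReal_mul, I_im]
    linarith [hθ.1, Real.pi_pos]

lemma ofReal_ne_exp_mul_I (hθ : θ ∈ Ioo 0 (2 * Real.pi)) {t : ℝ} (ht : 0 ≤ t) :
    (t : ℂ) ≠ exp (θ * I) := by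
  intro h
  have ht_one : t = 1 := by
    simpa [abs_of_nonneg ht, norm_exp_ofReal_mul_I] using congrArg norm h
  have hcos : Real.cos θ = 1 := by
    simpa [ht_one, exp_ofReal_mul_I_re] using (congrArg re h).symm
  exact hθ.1.ne' ((Real.cos_eq_one_iff_of_lt_of_lt (by linarith [hθ.1, Real.pi_pos]) hθ.2).mp hcos)

lemma integral_one_div_ofReal_sub_exp_mul_I (hθ : θ ∈ Ioo 0 (2 * Real.pi)) :
    ∫ t in (0 : ℝ)..1, 1 / ((t : ℂ) - exp (θ * I)) =
      Real.log (2 * Real.sin (θ / 2)) + (Real.pi - θ) / 2 * I := by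
  rw [integral_one_div_ofReal_sub fun _ ht ↦ ofReal_ne_exp_mul_I hθ (by simpa using ht.1),
    ← log_one_sub_exp_neg_mul_I hθ]
  congr 1
  rw [exp_neg]
  field_simp
  push_cast
  ring

lemma integral_sum_div_ofReal_sub_exp_mul_I {ι : Type*} (s : Finset ι) (c : ι → ℂ) {θ : ι → ℝ}
    (hθ : ∀ k ∈ s, θ k ∈ Ioo 0 (2 * Real.pi)) :
    ∫ t in (0 : ℝ)..1, ∑ k ∈ s, c k / ((t : ℂ) - exp (θ k * I)) =
      ∑ k ∈ s, c k * (Real.log (2 * Real.sin (θ k / 2)) + (Real.pi - θ k) / 2 * I) := by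
  simp only [div_eq_mul_one_div (c _)]
  rw [intervalIntegral.integral_finsetSum fun k hk ↦
    (intervalIntegrable_one_div_ofReal_sub fun _ ht ↦
      ofReal_ne_exp_mul_I (hθ k hk) (by simpa using ht.1)).const_mul _]
  refine Finset.sum_congr rfl fun k hk ↦ ?_
  rw [intervalIntegral.integral_const_mul, integral_one_div_ofReal_sub_exp_mul_I (hθ k hk)]

lemma p₁_eq_exp (φ : ℝ) : p₁ φ = exp (φ * I) := by
  rw [p₁, mul_comm]

lemma p₂_eq_exp (φ : ℝ) : p₂ φ = exp ((Real.pi - φ : ℝ) * I) := by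
  rw [p₂, ← exp_antiperiodic]
  congr 1
  push_cast
  ring

lemma p₃_eq_exp (φ : ℝ) : p₃ φ = exp ((Real.pi + φ : ℝ) * I) := by
  rw [p₃, p₁, ← exp_antiperiodic]
  congr 1
  push_cast
  ring

lemma p₄_eq_exp (φ : ℝ) : p₄ φ = exp ((2 * Real.pi - φ : ℝ) * I) := by
  rw [p₄, ← exp_periodic]
  congr 1
  push_cast
  ring

variable {φ : ℝ}

lemma integral_sum_div_ofReal_sub_p (hφ : φ ∈ Ioo 0 Real.pi) (a b c d : ℂ) :
    ∫ t in (0 : ℝ)..1, (a / (t - p₁ φ) + b / (t - p₂ φ) + c / (t - p₃ φ) + d / (t - p₄ φ)) =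
      (a + d) * Real.log (2 * Real.sin (φ / 2)) + (b + c) * Real.log (2 * Real.cos (φ / 2)) +
        ((a - d) * (Real.pi - φ) + (b - c) * φ) / 2 * I := by
  have hargs : ∀ k, ![φ, Real.pi - φ, Real.pi + φ, 2 * Real.pi - φ] k ∈ Ioo 0 (2 * Real.pi) := by
    obtain ⟨hφ_pos, hφ_lt⟩ := hφ
    intro k
    fin_cases k <;> constructor <;> simp only [Fin.reduceFinMk, Matrix.cons_val] <;> linarith
  have hsin₂ : Real.sin ((Real.pi - φ) / 2) = Real.cos (φ / 2) := by
    rw [sub_div, Real.sin_pi_div_two_sub]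
  have hsin₃ : Real.sin ((Real.pi + φ) / 2) = Real.cos (φ / 2) := by
    rw [add_div, add_comm, Real.sin_add_pi_div_two]
  have hsin₄ : Real.sin ((2 * Real.pi - φ) / 2) = Real.sin (φ / 2) := by
    rw [sub_div, mul_div_cancel_left₀ _ two_ne_zero, Real.sin_pi_sub]
  have hsum := integral_sum_div_ofReal_sub_exp_mul_I Finset.univ ![a, b, c, d] fun k _ ↦ hargs k
  simp only [Fin.sum_univ_four, Matrix.cons_val] at hsum
  rw [← p₁_eq_exp, ← p₂_eq_exp, ← p₃_eq_exp, ← p₄_eq_exp, hsin₂, hsin₃, hsin₄] at hsum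
  rw [hsum]
  push_cast
  ring

lemma log_one_sub_cos_div_one_add_cos (hφ : φ ∈ Ioo 0 Real.pi) :
    Real.log ((1 - Real.cos φ) / (1 + Real.cos φ)) =
      2 * Real.log (2 * Real.sin (φ / 2)) - 2 * Real.log (2 * Real.cos (φ / 2)) := by
  have hsin : 0 < Real.sin (φ / 2) :=
    Real.sin_pos_of_pos_of_lt_pi (by linarith [hφ.1]) (by linarith [hφ.1, hφ.2])
  have hcos : 0 < Real.cos (φ / 2) :=
    Real.cos_pos_of_mem_Ioo ⟨by linarith [hφ.1, Real.pi_pos], by linarith [hφ.2]⟩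
  have hquot : (1 - Real.cos φ) / (1 + Real.cos φ) =
      (2 * Real.sin (φ / 2)) ^ 2 / (2 * Real.cos (φ / 2)) ^ 2 := by
    rw [mul_pow, mul_pow, mul_div_mul_left _ _ (by norm_num), Real.sin_sq_eq_half_sub,
      Real.cos_sq, mul_div_cancel₀ _ two_ne_zero, ← sub_div, ← add_div,
      div_div_div_cancel_right₀ two_ne_zero]
  rw [hquot, Real.log_div (by positivity) (by positivity), Real.log_pow, Real.log_pow]
  norm_num

end UnitCirclePoles

theorem stmt_6_general (φ : ℝ) (hφ : φ ∈ Set.Ioo 0 Real.pi) :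
    (∫ t in (0:ℝ)..1, Fa φ (t : ℂ)) = Complex.I * ((Real.pi : ℂ) - 2 * (φ : ℂ)) ∧
    (∫ t in (0:ℝ)..1, Fb φ (t : ℂ)) =
      ((Real.log ((1 - Real.cos φ) / (1 + Real.cos φ)) : ℝ) : ℂ) ∧
    (∫ t in (0:ℝ)..1, Fc φ (t : ℂ)) = Complex.I * (Real.pi : ℂ) := by
  refine ⟨?_, ?_, ?_⟩
  · have hFa := integral_sum_div_ofReal_sub_p hφ 1 (-1) 1 (-1)
    simp only [neg_div, ← sub_eq_add_neg] at hFa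
    unfold Fa
    rw [hFa]
    ring
  · have hFb := integral_sum_div_ofReal_sub_p hφ 1 (-1) (-1) 1
    simp only [neg_div, ← sub_eq_add_neg] at hFb
    unfold Fb
    rw [hFb, log_one_sub_cos_div_one_add_cos hφ]
    push_cast
    ring
  · have hFc := integral_sum_div_ofReal_sub_p hφ 1 1 (-1) (-1)
    simp only [neg_div, ← sub_eq_add_neg] at hFc
    unfold Fc
    rw [hFc]
    ring

/- STATEMENT 6: the integrals of `F_a, F_b, F_c` along the real segment `[0,1]`. -/
theorem stmt_6 (φ : ℝ) (hφ : φ ∈ Set.Ioo 0 (Real.pi / 2)) :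
    (∫ t in (0:ℝ)..1, Fa φ (t : ℂ)) = Complex.I * ((Real.pi : ℂ) - 2 * (φ : ℂ)) ∧
    (∫ t in (0:ℝ)..1, Fb φ (t : ℂ)) =
      ((Real.log ((1 - Real.cos φ) / (1 + Real.cos φ)) : ℝ) : ℂ) ∧
    (∫ t in (0:ℝ)..1, Fc φ (t : ℂ)) = Complex.I * (Real.pi : ℂ) := by
  exact stmt_6_general φ ⟨hφ.1, hφ.2.trans (half_lt_self Real.pi_pos)⟩
end
end

section
/- Let φ ∈ (0, π/2). Then the integrals along the straight segment from 0 to i, parametrized as z = it with t ∈ [0,1], satisfy: ∫₀¹ F_a(it)·i dt = −2iφ, ∫₀¹ F_b(it)·i dt = −iπ, and ∫₀¹ F_c(it)·i dt = log((1 − sin φ)/(1 + sin φ)). -/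
noncomputable section

/-!
A simple pole `p` contributes `∫₀¹ w / (w t - p) dt = log (1 - w / p)`, the principal branch being
continuous along the segment as long as `1 - w / p` is off the cut. Here `w = i` and all poles are
on the unit circle, so `w / p = e^{iθ}` with `θ ∈ (0, 2π)`, and
`1 - e^{iθ} = 2 sin (θ / 2) e^{i(θ - π) / 2}` makes both parts of the logarithm explicit. The four
angles are `π/2 ∓ φ` and `3π/2 ± φ`: in `F_a` and `F_b` the moduli cancel, in `F_c` the arguments.
-/

open Complex
open scoped Real

section LogOneSubExp

variable {θ : ℝ}

lemma one_sub_exp_mul_I (θ : ℝ) :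
    1 - exp (θ * I) = (2 * Real.sin (θ / 2) : ℝ) * exp (((θ - π) / 2 : ℝ) * I) := by
  have h_half : exp (θ * I) = exp (θ / 2 * I) * exp (θ / 2 * I) := by
    rw [← exp_add]; ring_nf
  have h_shift : exp (((θ - π) / 2 : ℝ) * I) = exp (θ / 2 * I) * -I := by
    rw [← exp_neg_pi_div_two_mul_I, ← exp_add]; push_cast; ring_nf
  have h_inv : exp (-(θ / 2) * I) * exp (θ / 2 * I) = 1 := by
    rw [← exp_add, neg_mul, neg_add_cancel, exp_zero]
  rw [h_half, h_shift]
  push_cast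
  rw [two_sin]
  linear_combination -h_inv + (exp (-(θ / 2) * I) * exp (θ / 2 * I) - exp (θ / 2 * I) ^ 2) * I_sq

lemma two_sub_two_mul_cos (θ : ℝ) : 2 - 2 * Real.cos θ = (2 * Real.sin (θ / 2)) ^ 2 := by
  rw [mul_pow, Real.sin_sq_eq_half_sub, mul_div_cancel₀ θ two_ne_zero]
  ring

lemma one_sub_exp_mul_I_mem_slitPlane (hθ : θ ∈ Set.Ioo 0 (2 * π)) :
    1 - exp (θ * I) ∈ slitPlane := by
  have h_cos_ne : Real.cos θ ≠ 1 := fun h ↦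
    hθ.1.ne' ((Real.cos_eq_one_iff_of_lt_of_lt (by linarith [hθ.1, hθ.2]) hθ.2).1 h)
  refine Or.inl ?_
  rw [sub_re, one_re, exp_ofReal_mul_I_re, sub_pos]
  exact (Real.cos_le_one θ).lt_of_ne h_cos_ne

lemma log_one_sub_exp_mul_I (hθ : θ ∈ Set.Ioo 0 (2 * π)) :
    log (1 - exp (θ * I)) = (Real.log (2 - 2 * Real.cos θ) / 2 : ℝ) + ((θ - π) / 2 : ℝ) * I := by
  obtain ⟨hθ_pos, hθ_lt⟩ := hθ
  have h_modulus_pos : 0 < 2 * Real.sin (θ / 2) :=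
    mul_pos two_pos (Real.sin_pos_of_pos_of_lt_pi (by linarith) (by linarith))
  have h_log_exp : log (exp (((θ - π) / 2 : ℝ) * I)) = ((θ - π) / 2 : ℝ) * I := by
    apply log_exp <;> rw [im_ofReal_mul, I_im] <;> linarith
  rw [one_sub_exp_mul_I, log_ofReal_mul h_modulus_pos (exp_ne_zero _), h_log_exp,
    two_sub_two_mul_cos, Real.log_pow, Nat.cast_two, mul_div_cancel_left₀ _ two_ne_zero]

end LogOneSubExp

section SegmentIntegral

variable {w p : ℂ}

lemma div_mul_sub_eq_neg_div_mul_inv (hp : p ≠ 0) (t : ℝ) :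
    w / (w * t - p) = -(w / p) * (1 + t • -(w / p))⁻¹ := by
  have h_factor : w * t - p = -p * (1 + t • -(w / p)) := by
    rw [real_smul]; field_simp; ring
  rw [h_factor, ← div_div, div_neg, div_eq_mul_inv (-(w / p))]

lemma intervalIntegrable_div_mul_sub (hp : p ≠ 0) (hwp : 1 - w / p ∈ slitPlane) :
    IntervalIntegrable (fun t : ℝ ↦ w / (w * t - p)) MeasureTheory.volume 0 1 := by
  simp only [div_mul_sub_eq_neg_div_mul_inv hp]
  rw [sub_eq_add_neg] at hwp
  apply ContinuousOn.intervalIntegrable_of_Icc zero_le_one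
  exact continuousOn_const.mul (continuousOn_one_add_mul_inv hwp)

lemma integral_div_mul_sub (hp : p ≠ 0) (hwp : 1 - w / p ∈ slitPlane) :
    ∫ t in (0 : ℝ)..1, w / (w * t - p) = log (1 - w / p) := by
  simp only [div_mul_sub_eq_neg_div_mul_inv hp]
  rw [sub_eq_add_neg] at hwp ⊢
  rw [intervalIntegral.integral_const_mul, log_eq_integral hwp]

lemma integral_sum_div_sub_mul {ι : Type*} (s : Finset ι) (c : ι → ℂ) {p : ι → ℂ}
    (hp : ∀ k ∈ s, p k ≠ 0) (hwp : ∀ k ∈ s, 1 - w / p k ∈ slitPlane) :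
    ∫ t in (0 : ℝ)..1, (∑ k ∈ s, c k / (w * t - p k)) * w =
      ∑ k ∈ s, c k * log (1 - w / p k) := by
  simp only [Finset.sum_mul, div_mul_eq_mul_div, mul_div_assoc]
  rw [intervalIntegral.integral_finsetSum fun k hk ↦
    (intervalIntegrable_div_mul_sub (hp k hk) (hwp k hk)).const_mul (c k)]
  refine Finset.sum_congr rfl fun k hk ↦ ?_
  rw [intervalIntegral.integral_const_mul, integral_div_mul_sub (hp k hk) (hwp k hk)]

end SegmentIntegral

section Poles

variable {φ : ℝ}

/-- The poles `p₁, p₂, p₃, p₄` as a family, so that `F_a`, `F_b` and `F_c` differ only in their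
vector of residues; the index is shifted by one, `pole φ 0` being `p₁ φ`. -/
def pole (φ : ℝ) : Fin 4 → ℂ := ![p₁ φ, p₂ φ, p₃ φ, p₄ φ]

/-- The angle from each pole counterclockwise to the endpoint `i` of the segment, that is, the
argument of `i / pole φ k`, in the branch `(0, 2π)` on which `log (1 - e^{iθ})` is explicit. -/
def angleToI (φ : ℝ) : Fin 4 → ℝ := ![π / 2 - φ, 3 * π / 2 + φ, 3 * π / 2 - φ, π / 2 + φ]

lemma I_div_pole (φ : ℝ) (k : Fin 4) : I / pole φ k = exp (angleToI φ k * I) := by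
  have h_exp_three_pi_div_two : exp (3 * π / 2 * I) = -I := by
    rw [show (3 * π / 2 * I : ℂ) = π * I + π / 2 * I by ring, exp_add, exp_pi_mul_I,
      exp_pi_div_two_mul_I, neg_one_mul]
  fin_cases k <;>
    simp [pole, angleToI, p₁, p₂, p₃, p₄, add_mul, sub_mul, exp_add, exp_sub, exp_neg,
      h_exp_three_pi_div_two, exp_pi_div_two_mul_I, mul_comm I, div_neg, neg_div]

lemma pole_ne_zero (φ : ℝ) (k : Fin 4) : pole φ k ≠ 0 := fun h ↦
  exp_ne_zero (angleToI φ k * I) (by rw [← I_div_pole, h, div_zero])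

lemma angleToI_mem_Ioo (hφ : φ ∈ Set.Ioo (-(π / 2)) (π / 2)) (k : Fin 4) :
    angleToI φ k ∈ Set.Ioo 0 (2 * π) := by
  obtain ⟨hφ_gt, hφ_lt⟩ := hφ
  fin_cases k <;> constructor <;>
    simp only [angleToI, Fin.reduceFinMk, Matrix.cons_val] <;> linarith

lemma cos_angleToI (φ : ℝ) (k : Fin 4) :
    Real.cos (angleToI φ k) = ![Real.sin φ, Real.sin φ, -Real.sin φ, -Real.sin φ] k := by
  have h_pi_sub : Real.cos (π / 2 - φ) = Real.sin φ := Real.cos_pi_div_two_sub φ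
  have h_pi_add : Real.cos (π / 2 + φ) = -Real.sin φ := by
    rw [add_comm, Real.cos_add_pi_div_two]
  have h_three_pi_add : Real.cos (3 * π / 2 + φ) = Real.sin φ := by
    rw [show 3 * π / 2 + φ = φ - π / 2 + 2 * π by ring, Real.cos_add_two_pi,
      Real.cos_sub_pi_div_two]
  have h_three_pi_sub : Real.cos (3 * π / 2 - φ) = -Real.sin φ := by
    rw [show 3 * π / 2 - φ = π / 2 - φ + π by ring, Real.cos_add_pi, Real.cos_pi_div_two_sub]
  fin_cases k <;> simp [angleToI, h_pi_sub, h_three_pi_add, h_three_pi_sub, h_pi_add]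

lemma integral_sum_div_sub_pole (hφ : φ ∈ Set.Ioo (-(π / 2)) (π / 2)) (c : Fin 4 → ℂ) :
    ∫ t in (0 : ℝ)..1, (∑ k, c k / (I * t - pole φ k)) * I =
      (c 0 + c 1) / 2 * Real.log (2 - 2 * Real.sin φ) +
      (c 2 + c 3) / 2 * Real.log (2 + 2 * Real.sin φ) +
      ((c 1 - c 0) * (π / 2 + φ) + (c 2 - c 3) * (π / 2 - φ)) / 2 * I := by
  have h_slit (k : Fin 4) : 1 - I / pole φ k ∈ slitPlane :=
    I_div_pole φ k ▸ one_sub_exp_mul_I_mem_slitPlane (angleToI_mem_Ioo hφ k)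
  rw [integral_sum_div_sub_mul _ c (fun k _ ↦ pole_ne_zero φ k) (fun k _ ↦ h_slit k)]
  simp only [I_div_pole, log_one_sub_exp_mul_I (angleToI_mem_Ioo hφ _), cos_angleToI]
  simp only [Fin.sum_univ_four, angleToI, Matrix.cons_val, mul_neg, sub_neg_eq_add]
  push_cast
  ring

lemma Fa_eq_sum (φ : ℝ) (z : ℂ) : Fa φ z = ∑ k, ![1, -1, 1, -1] k / (z - pole φ k) := by
  simp [Fa, pole, Fin.sum_univ_four, neg_div, sub_eq_add_neg]

lemma Fb_eq_sum (φ : ℝ) (z : ℂ) : Fb φ z = ∑ k, ![1, -1, -1, 1] k / (z - pole φ k) := by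
  simp [Fb, pole, Fin.sum_univ_four, neg_div, sub_eq_add_neg]

lemma Fc_eq_sum (φ : ℝ) (z : ℂ) : Fc φ z = ∑ k, ![1, 1, -1, -1] k / (z - pole φ k) := by
  simp [Fc, pole, Fin.sum_univ_four, neg_div, sub_eq_add_neg]

lemma log_one_sub_sin_div_one_add_sin (hφ : φ ∈ Set.Ioo (-(π / 2)) (π / 2)) :
    Real.log ((1 - Real.sin φ) / (1 + Real.sin φ)) =
      Real.log (2 - 2 * Real.sin φ) - Real.log (2 + 2 * Real.sin φ) := by
  have h_cos_pos : 0 < Real.cos φ := Real.cos_pos_of_mem_Ioo hφ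
  have h_sq : Real.sin φ ^ 2 < 1 := by nlinarith [Real.sin_sq_add_cos_sq φ]
  obtain ⟨h_gt, h_lt⟩ := abs_lt.1 ((sq_lt_one_iff_abs_lt_one _).1 h_sq)
  rw [← Real.log_div (by linarith) (by linarith), ← mul_div_mul_left _ _ (two_ne_zero' ℝ)]
  ring_nf

end Poles

theorem stmt_7_general (φ : ℝ) (hφ : φ ∈ Set.Ioo (-(π / 2)) (π / 2)) :
    (∫ t in (0 : ℝ)..1, Fa φ (I * t) * I) = -2 * I * φ ∧
    (∫ t in (0 : ℝ)..1, Fb φ (I * t) * I) = -I * π ∧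
    (∫ t in (0 : ℝ)..1, Fc φ (I * t) * I) =
      (Real.log ((1 - Real.sin φ) / (1 + Real.sin φ)) : ℝ) := by
  simp only [Fa_eq_sum, Fb_eq_sum, Fc_eq_sum, integral_sum_div_sub_pole hφ,
    log_one_sub_sin_div_one_add_sin hφ]
  refine ⟨?_, ?_, ?_⟩ <;> simp only [Matrix.cons_val] <;> push_cast <;> ring

/- STATEMENT 7: the integrals of `F_a, F_b, F_c` along the segment from `0` to `i`,
parametrized as `z = it`, `t ∈ [0,1]`. -/
theorem stmt_7 (φ : ℝ) (hφ : φ ∈ Set.Ioo 0 (Real.pi / 2)) :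
    (∫ t in (0:ℝ)..1, Fa φ (Complex.I * (t : ℂ)) * Complex.I) =
      -2 * Complex.I * (φ : ℂ) ∧
    (∫ t in (0:ℝ)..1, Fb φ (Complex.I * (t : ℂ)) * Complex.I) =
      -Complex.I * (Real.pi : ℂ) ∧
    (∫ t in (0:ℝ)..1, Fc φ (Complex.I * (t : ℂ)) * Complex.I) =
      ((Real.log ((1 - Real.sin φ) / (1 + Real.sin φ)) : ℝ) : ℂ) := by
  exact stmt_7_general φ ⟨by linarith [hφ.1, hφ.2], hφ.2⟩
end
end

section
/- Let φ ∈ (0, π/2) and define Ω_a(t) = ∫₀ᵗ F_a(s) ds and Ω_b(t) = ∫₀ᵗ F_b(s) ds for t ∈ [0,1]. Then ∫₀¹ (F_a(t)·Ω_b(t) − F_b(t)·Ω_a(t)) dt = 4πi·log(sin φ) − i(π − 2φ)·log((1 − cos φ)/(1 + cos φ)). -/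
noncomputable section

/-!
Integration by parts turns the left-hand side into `2 ∫₀¹ F_a Ω_b - Ω_a(1) Ω_b(1)`. Write `p = p₁`.
Since `p₄` and `p₂` are the conjugates of `p` and `p₃ = -p`, on the real line
`F_a(t) = 2i Im (1/(t - p) + 1/(t + p))` and `Ω_b(t) = 2 log (|t - p| / |t + p|)`. The first factor
is even and the second is odd, so folding `[-1, 1]` at `0` gives
`∫₀¹ F_a Ω_b = 4i ∫₋₁¹ Im (1/(t - p)) log (|t - p| / |t + p|) dt`.

The Möbius substitution `e^{iθ} = (1 - pt)/(t - p)` maps `[-1, 1]` onto the upper unit half circle,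
with `dθ = -2 Im (1/(t - p)) dt` and `|e^{iθ} + cos φ| = sin φ |t + p| / |t - p|`. The integral
becomes `½ ∫₀^π (log sin φ - log |e^{iθ} + cos φ|) dθ`, whose second term vanishes by Jensen's
formula because `|cos φ| < 1`.
-/

open Complex (I)
open scoped Real ComplexConjugate

section IntervalIntegral

variable {A : Type*} [NormedCommRing A] [NormedAlgebra ℝ A] [CompleteSpace A]

theorem integral_mul_primitive_sub_primitive_mul {f g : ℝ → A} (hf : Continuous f)
    (hg : Continuous g) (a b : ℝ) :
    ∫ t in a..b, (f t * (∫ s in a..t, g s) - g t * ∫ s in a..t, f s) =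
      2 * (∫ t in a..b, f t * ∫ s in a..t, g s) - (∫ t in a..b, f t) * ∫ t in a..b, g t := by
  have hasDeriv_F (t : ℝ) : HasDerivAt (fun t ↦ ∫ s in a..t, f s) (f t) t :=
    hf.integral_hasStrictDerivAt a t |>.hasDerivAt
  have hasDeriv_G (t : ℝ) : HasDerivAt (fun t ↦ ∫ s in a..t, g s) (g t) t :=
    hg.integral_hasStrictDerivAt a t |>.hasDerivAt
  have continuous_F : Continuous fun t ↦ ∫ s in a..t, f s :=
    continuous_iff_continuousAt.2 fun t ↦ (hasDeriv_F t).continuousAt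
  have continuous_G : Continuous fun t ↦ ∫ s in a..t, g s :=
    continuous_iff_continuousAt.2 fun t ↦ (hasDeriv_G t).continuousAt
  have by_parts := intervalIntegral.integral_mul_deriv_eq_deriv_mul (a := a) (b := b)
    (fun t _ ↦ hasDeriv_F t) (fun t _ ↦ hasDeriv_G t)
    (hf.intervalIntegrable _ _) (hg.intervalIntegrable _ _)
  simp only [intervalIntegral.integral_same, zero_mul, sub_zero] at by_parts
  rw [intervalIntegral.integral_sub
    ((hf.fun_mul continuous_G).intervalIntegrable _ _)
    ((hg.fun_mul continuous_F).intervalIntegrable _ _)]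
  simp only [mul_comm (g _), by_parts]
  ring

theorem integral_neg_self_eq_integral_add_comp_neg {E : Type*} [NormedAddCommGroup E]
    [NormedSpace ℝ E] {f : ℝ → E} (hf : Continuous f) (a : ℝ) :
    ∫ t in -a..a, f t = ∫ t in 0..a, (f t + f (-t)) := by
  have hf_neg : Continuous fun t ↦ f (-t) := hf.comp continuous_neg
  rw [intervalIntegral.integral_add (hf.intervalIntegrable _ _) (hf_neg.intervalIntegrable _ _),
    intervalIntegral.integral_comp_neg, neg_zero, add_comm,
    intervalIntegral.integral_add_adjacent_intervals (hf.intervalIntegrable _ _)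
      (hf.intervalIntegrable _ _)]

end IntervalIntegral

theorem norm_circleMap_two_pi_sub_add_ofReal (c θ : ℝ) :
    ‖circleMap 0 1 (2 * π - θ) + c‖ = ‖circleMap 0 1 θ + c‖ := by
  have circleMap_reflect : circleMap 0 1 (2 * π - θ) = conj (circleMap 0 1 θ) := by
    simp [circleMap, sub_mul, Complex.exp_sub, ← Complex.exp_conj, Complex.exp_neg]
  rw [circleMap_reflect, ← Complex.norm_conj (circleMap 0 1 θ + c), map_add, Complex.conj_ofReal]

theorem integral_log_norm_circleMap_add_ofReal (c : ℝ) :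
    ∫ θ in 0..π, Real.log ‖circleMap 0 1 θ + c‖ = π * Real.posLog |c| := by
  have full_circle : ∫ θ in 0..2 * π, Real.log ‖circleMap 0 1 θ + c‖ =
      2 * π * Real.posLog |c| := by
    have jensen := circleAverage_log_norm_sub_const_eq_posLog (a := -(c : ℂ))
    simp only [Real.circleAverage_def, sub_neg_eq_add, norm_neg, Complex.norm_real,
      Real.norm_eq_abs, smul_eq_mul] at jensen
    rwa [inv_mul_eq_iff_eq_mul₀ Real.two_pi_pos.ne'] at jensen
  have integrable_full : IntervalIntegrable (fun θ ↦ Real.log ‖circleMap 0 1 θ + c‖)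
      MeasureTheory.volume 0 (2 * π) := by
    simpa only [CircleIntegrable, sub_neg_eq_add] using
      circleIntegrable_log_norm_sub_const (a := -(c : ℂ)) (c := 0) 1
  have lower_half : ∫ θ in π..2 * π, Real.log ‖circleMap 0 1 θ + c‖ =
      ∫ θ in 0..π, Real.log ‖circleMap 0 1 θ + c‖ := by
    have reflect := intervalIntegral.integral_comp_sub_left (a := 0) (b := π)
      (fun θ ↦ Real.log ‖circleMap 0 1 θ + c‖) (2 * π)
    simp only [norm_circleMap_two_pi_sub_add_ofReal] at reflect
    rw [reflect]
    congr 1 <;> ring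
  have pi_mem : π ∈ Set.uIcc 0 (2 * π) :=
    Set.mem_uIcc_of_le Real.pi_pos.le (by linarith [Real.pi_pos])
  rw [← intervalIntegral.integral_add_adjacent_intervals (b := π)
    (integrable_full.mono_set (Set.uIcc_subset_uIcc_left pi_mem))
    (integrable_full.mono_set (Set.uIcc_subset_uIcc_right pi_mem)), lower_half] at full_circle
  linarith

theorem continuous_log_norm_circleMap_add {w : ℂ} (hw : ‖w‖ ≠ 1) :
    Continuous fun θ ↦ Real.log ‖circleMap 0 1 θ + w‖ := by
  refine Continuous.log (by fun_prop) fun θ ↦ norm_ne_zero_iff.2 fun h ↦ hw ?_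
  rw [eq_neg_of_add_eq_zero_right h, norm_neg, norm_circleMap_zero, abs_one]

theorem norm_ofReal_cos_ne_one {φ : ℝ} (hsin : Real.sin φ ≠ 0) : ‖(Real.cos φ : ℂ)‖ ≠ 1 := by
  rwa [Complex.norm_real, Real.norm_eq_abs, Ne, abs_eq zero_le_one,
    ← Real.sin_eq_zero_iff_cos_eq]

theorem one_sub_cos_div_sin (φ : ℝ) : (1 - Real.cos φ) / Real.sin φ = Real.tan (φ / 2) := by
  obtain ⟨ψ, rfl⟩ : ∃ ψ, φ = 2 * ψ := ⟨φ / 2, by ring⟩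
  have one_sub_cos : 1 - Real.cos (2 * ψ) = 2 * Real.sin ψ * Real.sin ψ := by
    rw [Real.cos_two_mul']
    linear_combination -Real.sin_sq_add_cos_sq ψ
  rw [mul_div_cancel_left₀ ψ two_ne_zero, one_sub_cos, Real.tan_eq_sin_div_cos]
  rcases eq_or_ne (Real.sin ψ) 0 with hsin | hsin
  · simp [hsin]
  · rw [Real.sin_two_mul, mul_div_mul_left _ _ (mul_ne_zero two_ne_zero hsin)]

theorem arctan_one_sub_cos_div_sin {φ : ℝ} (hφ : φ ∈ Set.Ioo (-π) π) :
    Real.arctan ((1 - Real.cos φ) / Real.sin φ) = φ / 2 := by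
  rw [one_sub_cos_div_sin, Real.arctan_tan (by linarith [hφ.1]) (by linarith [hφ.2])]

theorem arctan_one_add_cos_div_sin {φ : ℝ} (hφ : φ ∈ Set.Ioo 0 (2 * π)) :
    Real.arctan ((1 + Real.cos φ) / Real.sin φ) = (π - φ) / 2 := by
  rw [← arctan_one_sub_cos_div_sin (φ := π - φ) ⟨by linarith [hφ.2], by linarith [hφ.1]⟩,
    Real.cos_pi_sub, Real.sin_pi_sub, sub_neg_eq_add]

theorem arctan_cos_div_sin {φ : ℝ} (hφ : φ ∈ Set.Ioo 0 π) :
    Real.arctan (Real.cos φ / Real.sin φ) = π / 2 - φ := by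
  rw [← Real.sin_pi_div_two_sub, ← Real.cos_pi_div_two_sub φ, ← Real.tan_eq_sin_div_cos,
    Real.arctan_tan (by linarith [hφ.2]) (by linarith [hφ.1])]

theorem exp_two_mul_arctan_mul_I (x : ℝ) :
    Complex.exp (2 * Real.arctan x * I) = (1 + x * I) / (1 - x * I) := by
  have hadd : 1 + x * I ≠ 0 := fun h ↦ by simpa using congrArg Complex.re h
  have hsub : 1 - x * I ≠ 0 := fun h ↦ by simpa using congrArg Complex.re h
  rw [Complex.ofReal_arctan, Complex.arctan,
    show ∀ w : ℂ, 2 * (-I / 2 * w) * I = w from fun w ↦ by linear_combination -w * Complex.I_sq,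
    Complex.exp_log (div_ne_zero hadd hsub)]

section Pole

variable {p q : ℂ}

theorem ofReal_sub_ne_zero_of_im_ne_zero (hp : p.im ≠ 0) (t : ℝ) : (t : ℂ) - p ≠ 0 :=
  fun h ↦ hp (by simpa using congrArg Complex.im h)

theorem hasDerivAt_log_norm_ofReal_sub {t : ℝ} (ht : (t : ℂ) - p ≠ 0) :
    HasDerivAt (fun t : ℝ ↦ Real.log ‖(t : ℂ) - p‖) (t - p)⁻¹.re t := by
  have hasDeriv_sub : HasDerivAt (fun t : ℝ ↦ (t : ℂ) - p) 1 t :=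
    (Complex.ofRealCLM.hasDerivAt (x := t)).sub_const p
  have log_norm_eq : (fun t : ℝ ↦ Real.log ‖(t : ℂ) - p‖) =
      fun t : ℝ ↦ 1 / 2 * Real.log (‖(t : ℂ) - p‖ ^ 2) := by
    ext t
    simp
  rw [log_norm_eq]
  refine ((hasDeriv_sub.norm_sq.log (by positivity)).const_mul (1 / 2)).congr_deriv ?_
  rw [Complex.inv_re, Complex.normSq_eq_norm_sq, Complex.inner]
  simp only [one_div, map_sub, Complex.conj_ofReal, one_mul, Complex.sub_re, Complex.ofReal_re,
    Complex.conj_re]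
  ring

theorem hasDerivAt_arctan_sub_re_div_im (hp : p.im ≠ 0) (t : ℝ) :
    HasDerivAt (fun t : ℝ ↦ Real.arctan ((t - p.re) / p.im)) (t - p)⁻¹.im t := by
  refine (((hasDerivAt_id t).sub_const p.re).div_const p.im).arctan.congr_deriv ?_
  have hnorm : (t - p.re) ^ 2 + p.im ^ 2 ≠ 0 := by positivity
  simp only [id_eq, one_div, Complex.inv_im, Complex.sub_im, Complex.ofReal_im, zero_sub, neg_neg,
    Complex.normSq_apply, Complex.sub_re, Complex.ofReal_re, mul_neg, neg_mul]
  field_simp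
  ring

theorem continuous_inv_ofReal_sub (hp : p.im ≠ 0) :
    Continuous fun t : ℝ ↦ ((t : ℂ) - p)⁻¹ :=
  (Complex.continuous_ofReal.sub continuous_const).inv₀ (ofReal_sub_ne_zero_of_im_ne_zero hp)

theorem continuous_re_inv_ofReal_sub (hp : p.im ≠ 0) :
    Continuous fun t : ℝ ↦ (t - p)⁻¹.re :=
  Complex.continuous_re.comp (continuous_inv_ofReal_sub hp)

theorem continuous_im_inv_ofReal_sub (hp : p.im ≠ 0) :
    Continuous fun t : ℝ ↦ (t - p)⁻¹.im :=
  Complex.continuous_im.comp (continuous_inv_ofReal_sub hp)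

theorem integral_re_inv_ofReal_sub (hp : p.im ≠ 0) (a b : ℝ) :
    ∫ t in a..b, (t - p)⁻¹.re = Real.log ‖b - p‖ - Real.log ‖a - p‖ :=
  intervalIntegral.integral_eq_sub_of_hasDerivAt
    (fun t _ ↦ hasDerivAt_log_norm_ofReal_sub (ofReal_sub_ne_zero_of_im_ne_zero hp t))
    ((continuous_re_inv_ofReal_sub hp).intervalIntegrable _ _)

theorem integral_im_inv_ofReal_sub (hp : p.im ≠ 0) (a b : ℝ) :
    ∫ t in a..b, (t - p)⁻¹.im =
      Real.arctan ((b - p.re) / p.im) - Real.arctan ((a - p.re) / p.im) :=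
  intervalIntegral.integral_eq_sub_of_hasDerivAt
    (fun t _ ↦ hasDerivAt_arctan_sub_re_div_im hp t)
    ((continuous_im_inv_ofReal_sub hp).intervalIntegrable _ _)

theorem continuous_log_norm_ofReal_sub_div (hp : p.im ≠ 0) (hq : q.im ≠ 0) :
    Continuous fun t : ℝ ↦ Real.log (‖t - p‖ / ‖t - q‖) := by
  have norm_sub_p (t : ℝ) := norm_ne_zero_iff.2 (ofReal_sub_ne_zero_of_im_ne_zero hp t)
  have norm_sub_q (t : ℝ) := norm_ne_zero_iff.2 (ofReal_sub_ne_zero_of_im_ne_zero hq t)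
  exact Continuous.log (by fun_prop (disch := assumption))
    fun t ↦ div_ne_zero (norm_sub_p t) (norm_sub_q t)

end Pole

section Poles

variable {φ : ℝ}

theorem p₁_re (φ : ℝ) : (p₁ φ).re = Real.cos φ := by
  rw [p₁, mul_comm, Complex.exp_ofReal_mul_I_re]

theorem p₁_im (φ : ℝ) : (p₁ φ).im = Real.sin φ := by
  rw [p₁, mul_comm, Complex.exp_ofReal_mul_I_im]

theorem p₁_eq (φ : ℝ) : p₁ φ = Real.cos φ + Real.sin φ * I := by
  rw [← p₁_re, ← p₁_im, Complex.re_add_im]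

theorem p₃_re (φ : ℝ) : (p₃ φ).re = -Real.cos φ := by
  rw [p₃, Complex.neg_re, p₁_re]

theorem p₃_im (φ : ℝ) : (p₃ φ).im = -Real.sin φ := by
  rw [p₃, Complex.neg_im, p₁_im]

theorem p₁_im_ne_zero (hsin : Real.sin φ ≠ 0) : (p₁ φ).im ≠ 0 := by
  rwa [p₁_im]

theorem p₃_im_ne_zero (hsin : Real.sin φ ≠ 0) : (p₃ φ).im ≠ 0 := by
  rwa [p₃_im, neg_ne_zero]

theorem p₄_eq_conj_p₁ (φ : ℝ) : p₄ φ = conj (p₁ φ) := by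
  simp [p₁, p₄, ← Complex.exp_conj]

theorem p₂_eq_conj_p₃ (φ : ℝ) : p₂ φ = conj (p₃ φ) := by
  rw [p₃, map_neg, ← p₄_eq_conj_p₁, p₂, p₄]

theorem norm_one_sub_p₁_sq (φ : ℝ) : ‖1 - p₁ φ‖ ^ 2 = 2 * (1 - Real.cos φ) := by
  rw [← Complex.normSq_eq_norm_sq, Complex.normSq_apply, Complex.sub_re, Complex.sub_im, p₁_re,
    p₁_im, Complex.one_re, Complex.one_im]
  linear_combination Real.sin_sq_add_cos_sq φ

theorem norm_one_sub_p₃_sq (φ : ℝ) : ‖1 - p₃ φ‖ ^ 2 = 2 * (1 + Real.cos φ) := by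
  rw [← Complex.normSq_eq_norm_sq, Complex.normSq_apply, Complex.sub_re, Complex.sub_im, p₃_re,
    p₃_im, Complex.one_re, Complex.one_im]
  linear_combination Real.sin_sq_add_cos_sq φ

end Poles

section CircleAngle

variable {φ : ℝ}

/-- The argument of the point `(1 - pt) / (t - p)` of the unit circle, where `p = e^{iφ}`. As `t`
runs from `-1` to `1` it decreases from `π` to `0`, so it serves to substitute an integral over the
upper half circle for one over `[-1, 1]`. -/
def circleAngle (φ t : ℝ) : ℝ := φ - 2 * Real.arctan ((t - Real.cos φ) / Real.sin φ)

theorem circleAngle_one (hφ : φ ∈ Set.Ioo 0 π) : circleAngle φ 1 = 0 := by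
  rw [circleAngle, arctan_one_sub_cos_div_sin ⟨by linarith [hφ.1, hφ.2], hφ.2⟩]
  ring

theorem circleAngle_neg_one (hφ : φ ∈ Set.Ioo 0 π) : circleAngle φ (-1) = π := by
  rw [circleAngle, ← neg_add', neg_div, Real.arctan_neg,
    arctan_one_add_cos_div_sin ⟨hφ.1, by linarith [hφ.1, hφ.2]⟩]
  ring

theorem hasDerivAt_circleAngle (hsin : Real.sin φ ≠ 0) (t : ℝ) :
    HasDerivAt (circleAngle φ) (-(2 * (t - p₁ φ)⁻¹.im)) t := by
  have hasDeriv_arctan := hasDerivAt_arctan_sub_re_div_im (p₁_im_ne_zero hsin) t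
  rw [p₁_re, p₁_im] at hasDeriv_arctan
  exact (hasDeriv_arctan.const_mul 2).const_sub φ

theorem circleMap_circleAngle (hsin : Real.sin φ ≠ 0) (t : ℝ) :
    circleMap 0 1 (circleAngle φ t) = (1 - p₁ φ * t) / (t - p₁ φ) := by
  have sin_ne_zero : (Real.sin φ : ℂ) ≠ 0 := Complex.ofReal_ne_zero.2 hsin
  have pythagoras : (Real.sin φ : ℂ) ^ 2 + (Real.cos φ : ℂ) ^ 2 = 1 := by
    exact_mod_cast Real.sin_sq_add_cos_sq φ
  set x : ℝ := (t - Real.cos φ) / Real.sin φ with hx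
  have one_add_eq : 1 + x * I = I / Real.sin φ * (t - p₁ φ) := by
    rw [hx, p₁_eq]
    push_cast [-Complex.ofReal_sin, -Complex.ofReal_cos]
    field_simp
    linear_combination Real.sin φ * Complex.I_sq
  have p₁_mul_one_sub_eq : p₁ φ * (1 - x * I) = I / Real.sin φ * (1 - p₁ φ * t) := by
    rw [hx, p₁_eq]
    push_cast [-Complex.ofReal_sin, -Complex.ofReal_cos]
    field_simp
    linear_combination I * pythagoras + Real.sin φ * Real.cos φ * Complex.I_sq
  have exp_angle : circleMap 0 1 (circleAngle φ t) = p₁ φ * (1 - x * I) / (1 + x * I) := by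
    rw [circleMap_zero, circleAngle, ← hx, p₁, Complex.ofReal_one, one_mul, Complex.ofReal_sub,
      Complex.ofReal_mul, Complex.ofReal_ofNat, sub_mul, Complex.exp_sub,
      exp_two_mul_arctan_mul_I, mul_comm (φ : ℂ) I, div_div_eq_mul_div]
  rw [exp_angle, p₁_mul_one_sub_eq, one_add_eq,
    mul_div_mul_left _ _ (div_ne_zero Complex.I_ne_zero sin_ne_zero)]

theorem norm_circleMap_circleAngle_add_cos (hsin : 0 < Real.sin φ) (t : ℝ) :
    ‖circleMap 0 1 (circleAngle φ t) + Real.cos φ‖ =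
      Real.sin φ / (‖t - p₁ φ‖ / ‖t - p₃ φ‖) := by
  have sub_ne_zero := ofReal_sub_ne_zero_of_im_ne_zero (p₁_im_ne_zero hsin.ne') t
  have pythagoras : (Real.sin φ : ℂ) ^ 2 + (Real.cos φ : ℂ) ^ 2 = 1 := by
    exact_mod_cast Real.sin_sq_add_cos_sq φ
  have add_cos_eq : circleMap 0 1 (circleAngle φ t) + Real.cos φ =
      -I * Real.sin φ * ((t - p₃ φ) / (t - p₁ φ)) := by
    rw [circleMap_circleAngle hsin.ne', p₃]
    field_simp
    rw [p₁_eq]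
    linear_combination (Real.sin φ : ℂ) ^ 2 * Complex.I_sq - pythagoras
  rw [add_cos_eq, norm_mul, norm_mul, norm_neg, Complex.norm_I, one_mul, Complex.norm_real,
    Real.norm_of_nonneg hsin.le, norm_div, div_div_eq_mul_div, mul_div_assoc]

theorem log_norm_sub_p₁_div_norm_sub_p₃ (hsin : 0 < Real.sin φ) (t : ℝ) :
    Real.log (‖t - p₁ φ‖ / ‖t - p₃ φ‖) =
      Real.log (Real.sin φ) - Real.log ‖circleMap 0 1 (circleAngle φ t) + Real.cos φ‖ := by
  have norm_p₁ := norm_ne_zero_iff.2 (ofReal_sub_ne_zero_of_im_ne_zero (p₁_im_ne_zero hsin.ne') t)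
  have norm_p₃ := norm_ne_zero_iff.2 (ofReal_sub_ne_zero_of_im_ne_zero (p₃_im_ne_zero hsin.ne') t)
  rw [norm_circleMap_circleAngle_add_cos hsin, Real.log_div hsin.ne' (div_ne_zero norm_p₁ norm_p₃),
    sub_sub_cancel]

theorem integral_log_sin_sub_log_norm_circleMap_add_cos (hsin : Real.sin φ ≠ 0) :
    ∫ θ in 0..π, (Real.log (Real.sin φ) - Real.log ‖circleMap 0 1 θ + Real.cos φ‖) =
      π * Real.log (Real.sin φ) := by
  rw [intervalIntegral.integral_sub intervalIntegrable_const
    ((continuous_log_norm_circleMap_add (norm_ofReal_cos_ne_one hsin)).intervalIntegrable _ _),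
    integral_log_norm_circleMap_add_ofReal,
    (Real.posLog_eq_zero_iff _).2 (by rw [abs_abs]; exact Real.abs_cos_le_one φ)]
  simp

theorem integral_im_inv_mul_log_norm_div (hφ : φ ∈ Set.Ioo 0 π) :
    ∫ t in (-1 : ℝ)..1, (t - p₁ φ)⁻¹.im * Real.log (‖t - p₁ φ‖ / ‖t - p₃ φ‖) =
      π / 2 * Real.log (Real.sin φ) := by
  have hsin : 0 < Real.sin φ := Real.sin_pos_of_mem_Ioo hφ
  have substitution := intervalIntegral.integral_comp_mul_deriv (a := -1) (b := 1)
    (g := fun θ ↦ Real.log (Real.sin φ) - Real.log ‖circleMap 0 1 θ + Real.cos φ‖)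
    (fun t _ ↦ hasDerivAt_circleAngle hsin.ne' t)
    (continuous_const.mul
      (continuous_im_inv_ofReal_sub (p₁_im_ne_zero hsin.ne'))).neg.continuousOn
    (continuous_const.sub
      (continuous_log_norm_circleMap_add (norm_ofReal_cos_ne_one hsin.ne')))
  rw [circleAngle_one hφ, circleAngle_neg_one hφ, intervalIntegral.integral_symm 0 π,
    integral_log_sin_sub_log_norm_circleMap_add_cos hsin.ne'] at substitution
  calc
    _ = ∫ t in (-1 : ℝ)..1, -(1 / 2) *
          (Real.log (‖t - p₁ φ‖ / ‖t - p₃ φ‖) * -(2 * (t - p₁ φ)⁻¹.im)) := by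
      congr with t
      ring
    _ = -(1 / 2) * -(π * Real.log (Real.sin φ)) := by
      rw [intervalIntegral.integral_const_mul, ← substitution]
      simp only [Function.comp_apply, log_norm_sub_p₁_div_norm_sub_p₃ hsin]
    _ = π / 2 * Real.log (Real.sin φ) := by ring

theorem integral_im_inv_add_im_inv_mul_log_norm_div (hφ : φ ∈ Set.Ioo 0 π) :
    ∫ t in (0 : ℝ)..1,
        ((t - p₁ φ)⁻¹.im + (t - p₃ φ)⁻¹.im) * Real.log (‖t - p₁ φ‖ / ‖t - p₃ φ‖) =
      π / 2 * Real.log (Real.sin φ) := by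
  have hsin : Real.sin φ ≠ 0 := (Real.sin_pos_of_mem_Ioo hφ).ne'
  have continuous_integrand : Continuous fun t : ℝ ↦
      (t - p₁ φ)⁻¹.im * Real.log (‖t - p₁ φ‖ / ‖t - p₃ φ‖) :=
    (continuous_im_inv_ofReal_sub (p₁_im_ne_zero hsin)).mul
      (continuous_log_norm_ofReal_sub_div (p₁_im_ne_zero hsin) (p₃_im_ne_zero hsin))
  rw [← integral_im_inv_mul_log_norm_div hφ,
    integral_neg_self_eq_integral_add_comp_neg continuous_integrand]
  congr with t
  have reflect_p₁ : ((-t : ℝ) : ℂ) - p₁ φ = -(t - p₃ φ) := by rw [p₃]; push_cast; ring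
  have reflect_p₃ : ((-t : ℝ) : ℂ) - p₃ φ = -(t - p₁ φ) := by rw [p₃]; push_cast; ring
  rw [reflect_p₁, reflect_p₃, norm_neg, norm_neg, inv_neg, Complex.neg_im,
    ← inv_div ‖(t : ℂ) - p₁ φ‖, Real.log_inv]
  ring

end CircleAngle

section Forms

variable {φ : ℝ}

theorem Fa_ofReal (φ t : ℝ) :
    Fa φ t = 2 * I * (((t - p₁ φ)⁻¹.im + (t - p₃ φ)⁻¹.im : ℝ) : ℂ) := by
  have pair_p₁_p₄ := Complex.sub_conj (t - p₁ φ)⁻¹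
  have pair_p₃_p₂ := Complex.sub_conj (t - p₃ φ)⁻¹
  rw [map_inv₀, map_sub, Complex.conj_ofReal] at pair_p₁_p₄ pair_p₃_p₂
  rw [Fa, p₂_eq_conj_p₃, p₄_eq_conj_p₁]
  simp only [one_div]
  push_cast at pair_p₁_p₄ pair_p₃_p₂ ⊢
  linear_combination pair_p₁_p₄ + pair_p₃_p₂

theorem Fb_ofReal (φ t : ℝ) :
    Fb φ t = 2 * (((t - p₁ φ)⁻¹.re - (t - p₃ φ)⁻¹.re : ℝ) : ℂ) := by
  have pair_p₁_p₄ := Complex.add_conj (t - p₁ φ)⁻¹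
  have pair_p₃_p₂ := Complex.add_conj (t - p₃ φ)⁻¹
  rw [map_inv₀, map_sub, Complex.conj_ofReal] at pair_p₁_p₄ pair_p₃_p₂
  rw [Fb, p₂_eq_conj_p₃, p₄_eq_conj_p₁]
  simp only [one_div]
  push_cast at pair_p₁_p₄ pair_p₃_p₂ ⊢
  linear_combination pair_p₁_p₄ - pair_p₃_p₂

theorem continuous_Fa_ofReal (hsin : Real.sin φ ≠ 0) : Continuous fun t : ℝ ↦ Fa φ t := by
  simp only [Fa_ofReal]
  exact continuous_const.mul (Complex.continuous_ofReal.comp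
    ((continuous_im_inv_ofReal_sub (p₁_im_ne_zero hsin)).add
      (continuous_im_inv_ofReal_sub (p₃_im_ne_zero hsin))))

theorem continuous_Fb_ofReal (hsin : Real.sin φ ≠ 0) : Continuous fun t : ℝ ↦ Fb φ t := by
  simp only [Fb_ofReal]
  exact continuous_const.mul (Complex.continuous_ofReal.comp
    ((continuous_re_inv_ofReal_sub (p₁_im_ne_zero hsin)).sub
      (continuous_re_inv_ofReal_sub (p₃_im_ne_zero hsin))))

theorem integral_Fa_zero_one (hφ : φ ∈ Set.Ioo 0 π) :
    ∫ t in (0 : ℝ)..1, Fa φ t = I * (π - 2 * φ) := by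
  have hsin : Real.sin φ ≠ 0 := (Real.sin_pos_of_mem_Ioo hφ).ne'
  have integral_p₁ : ∫ t in (0 : ℝ)..1, (t - p₁ φ)⁻¹.im = (π - φ) / 2 := by
    rw [integral_im_inv_ofReal_sub (p₁_im_ne_zero hsin), p₁_re, p₁_im, zero_sub, neg_div,
      Real.arctan_neg, arctan_cos_div_sin hφ,
      arctan_one_sub_cos_div_sin ⟨by linarith [hφ.1, hφ.2], hφ.2⟩]
    ring
  have integral_p₃ : ∫ t in (0 : ℝ)..1, (t - p₃ φ)⁻¹.im = -φ / 2 := by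
    rw [integral_im_inv_ofReal_sub (p₃_im_ne_zero hsin), p₃_re, p₃_im, sub_neg_eq_add,
      sub_neg_eq_add, zero_add, div_neg, div_neg, Real.arctan_neg, Real.arctan_neg,
      arctan_cos_div_sin hφ, arctan_one_add_cos_div_sin ⟨hφ.1, by linarith [hφ.1, hφ.2]⟩]
    ring
  simp only [Fa_ofReal]
  rw [intervalIntegral.integral_const_mul, intervalIntegral.integral_ofReal,
    intervalIntegral.integral_add
      ((continuous_im_inv_ofReal_sub (p₁_im_ne_zero hsin)).intervalIntegrable _ _)
      ((continuous_im_inv_ofReal_sub (p₃_im_ne_zero hsin)).intervalIntegrable _ _),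
    integral_p₁, integral_p₃]
  push_cast
  ring

theorem integral_Fb_zero_left (hsin : Real.sin φ ≠ 0) (t : ℝ) :
    ∫ s in (0 : ℝ)..t, Fb φ s = ((2 * Real.log (‖t - p₁ φ‖ / ‖t - p₃ φ‖) : ℝ) : ℂ) := by
  have norm_p₁ := norm_ne_zero_iff.2 (ofReal_sub_ne_zero_of_im_ne_zero (p₁_im_ne_zero hsin) t)
  have norm_p₃ := norm_ne_zero_iff.2 (ofReal_sub_ne_zero_of_im_ne_zero (p₃_im_ne_zero hsin) t)
  simp only [Fb_ofReal]
  rw [intervalIntegral.integral_const_mul, intervalIntegral.integral_ofReal,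
    intervalIntegral.integral_sub
      ((continuous_re_inv_ofReal_sub (p₁_im_ne_zero hsin)).intervalIntegrable _ _)
      ((continuous_re_inv_ofReal_sub (p₃_im_ne_zero hsin)).intervalIntegrable _ _),
    integral_re_inv_ofReal_sub (p₁_im_ne_zero hsin),
    integral_re_inv_ofReal_sub (p₃_im_ne_zero hsin),
    Real.log_div norm_p₁ norm_p₃]
  simp [p₃]

theorem integral_Fb_zero_one (hsin : Real.sin φ ≠ 0) :
    ∫ t in (0 : ℝ)..1, Fb φ t = (Real.log ((1 - Real.cos φ) / (1 + Real.cos φ)) : ℂ) := by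
  rw [integral_Fb_zero_left hsin, ← mul_div_mul_left (1 - _) _ two_ne_zero, ← norm_one_sub_p₁_sq,
    ← norm_one_sub_p₃_sq, ← div_pow, Real.log_pow, Complex.ofReal_one, Nat.cast_ofNat]

theorem integral_Fa_mul_integral_Fb (hφ : φ ∈ Set.Ioo 0 π) :
    ∫ t in (0 : ℝ)..1, Fa φ t * ∫ s in (0 : ℝ)..t, Fb φ s =
      2 * π * I * (Real.log (Real.sin φ) : ℂ) := by
  have integrand_eq (t : ℝ) : Fa φ t * ∫ s in (0 : ℝ)..t, Fb φ s =
      4 * I * ((((t - p₁ φ)⁻¹.im + (t - p₃ φ)⁻¹.im) *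
        Real.log (‖t - p₁ φ‖ / ‖t - p₃ φ‖) : ℝ) : ℂ) := by
    rw [Fa_ofReal, integral_Fb_zero_left (Real.sin_pos_of_mem_Ioo hφ).ne']
    push_cast
    ring
  simp only [integrand_eq]
  rw [intervalIntegral.integral_const_mul, intervalIntegral.integral_ofReal,
    integral_im_inv_add_im_inv_mul_log_norm_div hφ]
  push_cast
  ring

end Forms

theorem stmt_8_general (φ : ℝ) (hφ : φ ∈ Set.Ioo 0 Real.pi) :
    (∫ t in (0:ℝ)..1,
        (Fa φ (t : ℂ) * (∫ s in (0:ℝ)..t, Fb φ (s : ℂ)) -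
          Fb φ (t : ℂ) * (∫ s in (0:ℝ)..t, Fa φ (s : ℂ)))) =
      4 * (Real.pi : ℂ) * Complex.I * ((Real.log (Real.sin φ) : ℝ) : ℂ) -
        Complex.I * ((Real.pi : ℂ) - 2 * (φ : ℂ)) *
          ((Real.log ((1 - Real.cos φ) / (1 + Real.cos φ)) : ℝ) : ℂ) := by
  have hsin : Real.sin φ ≠ 0 := (Real.sin_pos_of_mem_Ioo hφ).ne'
  rw [integral_mul_primitive_sub_primitive_mul (continuous_Fa_ofReal hsin)
    (continuous_Fb_ofReal hsin), integral_Fa_mul_integral_Fb hφ, integral_Fa_zero_one hφ,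
    integral_Fb_zero_one hsin]
  ring

/- STATEMENT 8: with `Ω_a(t) = ∫₀ᵗ F_a`, `Ω_b(t) = ∫₀ᵗ F_b` along `[0,1]`,
`∫₀¹ (F_a Ω_b - F_b Ω_a) = 4πi log(sin φ) - i(π - 2φ) log((1-cos φ)/(1+cos φ))`. -/
theorem stmt_8 (φ : ℝ) (hφ : φ ∈ Set.Ioo 0 (Real.pi / 2)) :
    (∫ t in (0:ℝ)..1,
        (Fa φ (t : ℂ) * (∫ s in (0:ℝ)..t, Fb φ (s : ℂ)) -
          Fb φ (t : ℂ) * (∫ s in (0:ℝ)..t, Fa φ (s : ℂ)))) =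
      4 * (Real.pi : ℂ) * Complex.I * ((Real.log (Real.sin φ) : ℝ) : ℂ) -
        Complex.I * ((Real.pi : ℂ) - 2 * (φ : ℂ)) *
          ((Real.log ((1 - Real.cos φ) / (1 + Real.cos φ)) : ℝ) : ℂ) := by
  exact stmt_8_general φ ⟨hφ.1, by linarith [hφ.2, Real.pi_pos]⟩
end
end

section
/- The alternating multiple zeta values Li_{3,1}(1,−1) = ∑_{0<k₁<k₂} (−1)^{k₂} / (k₁³ · k₂) and Li_{1,3}(−1,1) = ∑_{0<k₁<k₂} (−1)^{k₁} / (k₁ · k₂³) satisfy Li_{3,1}(1,−1) + Li_{1,3}(−1,1) = −log(2)·ζ(3) + (7/8)·ζ(4), where ζ(4) = π⁴/90; equivalently 2·Li_{3,1}(1,−1) + 2·Li_{1,3}(−1,1) = −2·log(2)·ζ(3) + (7/4)·ζ(4). -/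
open Filter Topology

/-!
The partial sums of two series satisfy the stuffle identity
`(∑ a) (∑ b) = ∑_{m < n} a m * b n + ∑_{m < n} a n * b m + ∑ a n * b n`. For `a n = 1 / n ^ p` and
`b n = (-1) ^ n / n` the two series on the left converge to `ζ(p)` and `-log 2`, and the diagonal
sums to `-(1 - 2 ^ (-p)) ζ(p + 1)`. The second double sum converges absolutely, because the partial
sums of `b` are bounded, so the first one, which is only conditionally convergent, converges too.
-/

section Stuffle

variable {R : Type*}

lemma sum_range_mul_sum_range_eq_stuffle [NonUnitalNonAssocSemiring R] (a b : ℕ → R) (N : ℕ) :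
    (∑ n ∈ Finset.range N, a n) * ∑ n ∈ Finset.range N, b n =
      ∑ n ∈ Finset.range N, ∑ m ∈ Finset.range n, a m * b n +
        ∑ n ∈ Finset.range N, ∑ m ∈ Finset.range n, a n * b m +
        ∑ n ∈ Finset.range N, a n * b n := by
  induction N with
  | zero => simp
  | succ N ih =>
    simp only [Finset.sum_range_succ, add_mul, mul_add, ih]
    simp only [← Finset.sum_mul, ← Finset.mul_sum]
    abel

lemma tendsto_sum_sum_range_mul_of_stuffle [NonUnitalNonAssocRing R] [TopologicalSpace R]
    [IsTopologicalRing R] {a b : ℕ → R} {A B T D : R}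
    (ha : Tendsto (fun N ↦ ∑ n ∈ Finset.range N, a n) atTop (𝓝 A))
    (hb : Tendsto (fun N ↦ ∑ n ∈ Finset.range N, b n) atTop (𝓝 B))
    (hT : Tendsto (fun N ↦ ∑ n ∈ Finset.range N, ∑ m ∈ Finset.range n, a n * b m) atTop (𝓝 T))
    (hD : Tendsto (fun N ↦ ∑ n ∈ Finset.range N, a n * b n) atTop (𝓝 D)) :
    Tendsto (fun N ↦ ∑ n ∈ Finset.range N, ∑ m ∈ Finset.range n, a m * b n) atTop
      (𝓝 (A * B - T - D)) := by
  refine (((ha.mul hb).sub hT).sub hD).congr fun N ↦ ?_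
  rw [sum_range_mul_sum_range_eq_stuffle]
  abel

lemma summable_sum_range_mul_of_tendsto [NonUnitalNormedRing R] [CompleteSpace R]
    {a b : ℕ → R} {B : R} (ha : Summable fun n ↦ ‖a n‖)
    (hb : Tendsto (fun N ↦ ∑ n ∈ Finset.range N, b n) atTop (𝓝 B)) :
    Summable fun n ↦ ∑ m ∈ Finset.range n, a n * b m := by
  obtain ⟨C, hC⟩ := hb.norm.bddAbove_range
  refine .of_norm_bounded (ha.mul_right C) fun n ↦ ?_
  calc ‖∑ m ∈ Finset.range n, a n * b m‖
      ≤ ‖a n‖ * ‖∑ m ∈ Finset.range n, b m‖ := by rw [← Finset.mul_sum]; exact norm_mul_le _ _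
    _ ≤ ‖a n‖ * C := by gcongr; exact hC ⟨n, rfl⟩

lemma sum_Icc_one_sum_Ico_one_eq_sum_range [AddCommMonoid R] {f : ℕ → ℕ → R}
    (hf : ∀ n, f 0 n = 0) (N : ℕ) :
    ∑ n ∈ Finset.Icc 1 N, ∑ m ∈ Finset.Ico 1 n, f m n =
      ∑ n ∈ Finset.range (N + 1), ∑ m ∈ Finset.range n, f m n := by
  have inner (n : ℕ) : ∑ m ∈ Finset.Ico 1 n, f m n = ∑ m ∈ Finset.range n, f m n := by
    rcases n.eq_zero_or_pos with rfl | hn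
    · simp
    · rw [Finset.sum_range_eq_add_Ico _ hn, hf, zero_add]
  rw [Finset.sum_range_eq_add_Ico _ N.succ_pos, Finset.sum_range_zero, zero_add,
    Nat.succ_eq_add_one, Finset.Ico_add_one_right_eq_Icc]
  exact Finset.sum_congr rfl fun n _ ↦ inner n

end Stuffle

section AlternatingSeries

lemma sum_range_neg_one_pow_div_eq_harmonic_sub (n : ℕ) :
    ∑ k ∈ Finset.range (2 * n + 1), (-1 : ℝ) ^ k / k = harmonic n - harmonic (2 * n) := by
  induction n with
  | zero => simp
  | succ n ih =>
    rw [show 2 * (n + 1) = 2 * n + 1 + 1 by ring, Finset.sum_range_succ, Finset.sum_range_succ, ih,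
      harmonic_succ, harmonic_succ, harmonic_succ]
    have odd_pow : (-1 : ℝ) ^ (2 * n + 1) = -1 := by simp [pow_succ]
    have even_pow : (-1 : ℝ) ^ (2 * n + 1 + 1) = 1 := by simp [pow_succ]
    rw [odd_pow, even_pow]
    push_cast
    field_simp
    ring

lemma tendsto_harmonic_sub_harmonic_two_mul :
    Tendsto (fun n : ℕ ↦ (harmonic n - harmonic (2 * n) : ℝ)) atTop (𝓝 (-Real.log 2)) := by
  have two_mul_atTop : Tendsto (fun n : ℕ ↦ 2 * n) atTop atTop :=
    tendsto_id.const_mul_atTop' two_pos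
  have log_corrected := (Real.tendsto_harmonic_sub_log.sub
    (Real.tendsto_harmonic_sub_log.comp two_mul_atTop)).sub_const (Real.log 2)
  rw [sub_self, zero_sub] at log_corrected
  refine log_corrected.congr' ?_
  filter_upwards [eventually_ne_atTop 0] with n hn
  simp only [Function.comp_apply, Nat.cast_mul, Nat.cast_ofNat]
  rw [Real.log_mul two_ne_zero (Nat.cast_ne_zero.2 hn)]
  ring

lemma exists_tendsto_sum_range_neg_one_pow_div :
    ∃ l, Tendsto (fun N ↦ ∑ n ∈ Finset.range N, (-1 : ℝ) ^ n / n) atTop (𝓝 l) := by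
  have antitone_inv : Antitone fun n : ℕ ↦ 1 / ((n : ℝ) + 1) :=
    fun m n h ↦ by dsimp only; gcongr
  obtain ⟨l, hl⟩ := antitone_inv.tendsto_alternating_series_of_tendsto_zero
    tendsto_one_div_add_atTop_nhds_zero_nat
  refine ⟨-l, (tendsto_add_atTop_iff_nat 1).1 (hl.neg.congr fun N ↦ ?_)⟩
  rw [Finset.sum_range_succ', ← Finset.sum_neg_distrib]
  simp [pow_succ, div_eq_mul_inv]

lemma tendsto_sum_range_neg_one_pow_div :
    Tendsto (fun N ↦ ∑ n ∈ Finset.range N, (-1 : ℝ) ^ n / n) atTop (𝓝 (-Real.log 2)) := by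
  obtain ⟨l, hl⟩ := exists_tendsto_sum_range_neg_one_pow_div
  have odd_atTop : Tendsto (fun n : ℕ ↦ 2 * n + 1) atTop atTop :=
    tendsto_atTop_mono (fun n ↦ (by omega : n ≤ 2 * n + 1)) tendsto_id
  have hl_odd := (hl.comp odd_atTop).congr sum_range_neg_one_pow_div_eq_harmonic_sub
  rwa [← tendsto_nhds_unique hl_odd tendsto_harmonic_sub_harmonic_two_mul]

-- Adding `1 / n ^ p` to `(-1) ^ n / n ^ p` leaves twice the even-indexed terms.
lemma hasSum_neg_one_pow_div_nat_pow {K : Type*} [Field K] [TopologicalSpace K]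
    [IsTopologicalRing K] {p : ℕ} {z : K} (h : HasSum (fun n : ℕ ↦ 1 / (n : K) ^ p) z) :
    HasSum (fun n : ℕ ↦ (-1 : K) ^ n / (n : K) ^ p) (2 / 2 ^ p * z - z) := by
  have even_part : HasSum (fun n : ℕ ↦ (1 + (-1 : K) ^ n) / (n : K) ^ p) (2 / 2 ^ p * z + 0) := by
    refine HasSum.even_add_odd ?_ ?_
    · refine (h.mul_left (2 / 2 ^ p)).congr_fun fun k ↦ ?_
      rw [pow_mul, neg_one_sq, one_pow, one_add_one_eq_two, Nat.cast_mul, Nat.cast_ofNat, mul_pow,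
        div_mul_div_comm, mul_one]
    · simp [pow_succ]
  rw [add_zero] at even_part
  refine (even_part.sub h).congr_fun fun n ↦ ?_
  ring

end AlternatingSeries

theorem stmt_18_general {p : ℕ} (hp : 1 < p) :
    ∃ L₁ L₂ : ℝ,
      Tendsto (fun N : ℕ => ∑ k₂ ∈ Finset.Icc 1 N, ∑ k₁ ∈ Finset.Ico 1 k₂,
          (-1 : ℝ) ^ k₂ / ((k₁ : ℝ) ^ p * (k₂ : ℝ))) atTop (𝓝 L₁) ∧
      Tendsto (fun N : ℕ => ∑ k₂ ∈ Finset.Icc 1 N, ∑ k₁ ∈ Finset.Ico 1 k₂,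
          (-1 : ℝ) ^ k₁ / ((k₁ : ℝ) * (k₂ : ℝ) ^ p)) atTop (𝓝 L₂) ∧
      (L₁ : ℂ) + (L₂ : ℂ) =
        -((Real.log 2 : ℝ) : ℂ) * riemannZeta p + (1 - 1 / 2 ^ p) * riemannZeta (p + 1 : ℕ) := by
  have summable_a : Summable fun n : ℕ ↦ 1 / (n : ℝ) ^ p := Real.summable_one_div_nat_pow.2 hp
  have hD := hasSum_neg_one_pow_div_nat_pow
    (Real.summable_one_div_nat_pow.2 (hp.trans p.lt_succ_self)).hasSum
  have hT := (summable_sum_range_mul_of_tendsto summable_a.norm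
    tendsto_sum_range_neg_one_pow_div).hasSum.tendsto_sum_nat
  have hS := tendsto_sum_sum_range_mul_of_stuffle summable_a.hasSum.tendsto_sum_nat
    tendsto_sum_range_neg_one_pow_div hT (hD.tendsto_sum_nat.congr fun N ↦
      Finset.sum_congr rfl fun n _ ↦ by rw [div_mul_div_comm, one_mul, pow_succ])
  refine ⟨_, _, ((tendsto_add_atTop_iff_nat 1).2 hS).congr fun N ↦ ?_,
    ((tendsto_add_atTop_iff_nat 1).2 hT).congr fun N ↦ ?_, ?_⟩
  · rw [sum_Icc_one_sum_Ico_one_eq_sum_range (by simp [(zero_lt_one.trans hp).ne'])]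
    simp only [div_mul_div_comm, one_mul]
  · rw [sum_Icc_one_sum_Ico_one_eq_sum_range (by simp)]
    simp only [div_mul_div_comm, one_mul, mul_comm]
  · rw [zeta_nat_eq_tsum_of_gt_one hp, zeta_nat_eq_tsum_of_gt_one (hp.trans p.lt_succ_self)]
    push_cast
    rw [pow_succ]
    field_simp
    ring

/- The double series are interpreted as limits of the partial sums `∑_{k₂=1}^{N} ∑_{k₁=1}^{k₂-1}`
of their terms, since the first is not absolutely convergent. -/
theorem stmt_18 :
    ∃ L₁ L₂ : ℝ,
      Tendsto (fun N : ℕ => ∑ k₂ ∈ Finset.Icc 1 N, ∑ k₁ ∈ Finset.Ico 1 k₂,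
          (-1 : ℝ) ^ k₂ / ((k₁ : ℝ) ^ 3 * (k₂ : ℝ))) atTop (𝓝 L₁) ∧
      Tendsto (fun N : ℕ => ∑ k₂ ∈ Finset.Icc 1 N, ∑ k₁ ∈ Finset.Ico 1 k₂,
          (-1 : ℝ) ^ k₁ / ((k₁ : ℝ) * (k₂ : ℝ) ^ 3)) atTop (𝓝 L₂) ∧
      ((L₁ : ℂ) + (L₂ : ℂ) =
        -((Real.log 2 : ℝ) : ℂ) * riemannZeta 3 + (7 / 8 : ℂ) * riemannZeta 4) ∧
      riemannZeta 4 = (Real.pi : ℂ) ^ 4 / 90 := by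
  obtain ⟨L₁, L₂, h₁, h₂, hsum⟩ := stmt_18_general (p := 3) (by norm_num)
  exact ⟨L₁, L₂, h₁, h₂, by norm_num at hsum ⊢; exact hsum, riemannZeta_four⟩
end
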